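/- arXiv:2208.13957 — 4 statements merged into one kernel-verified Lean document; each statement's English description precedes it below -/
import Mathlib

section
/- Let m2, m3 be integers with m3 ≥ m2 ≥ 8, and let z be a real number with 1/r² < z ≤ 2.75/(m2·m3). Then F(−m2, −m3; 1/2; z) / F(−m2, −m3; 3/2; z) > 1 / H(z). -/
/-!
Write `a = 2 m₂ + 1`, `b = 2 m₃ + 1`, `r = a b + 1`, `f = F(-m₂,-m₃;1/2;·)`,
`g = F(-m₂,-m₃;3/2;·)` and `X = g / f`. The number `H(z)` is the positive root of
`(r² z - 1) X² - (a + b)(r z - 1) X - a b (1 - z)`, a quadratic that is linear in `z` and equals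
`z (r X - a)(r X - b) - (a - X)(b - X)` (`crossPoly`). So the claim is that this quantity is
negative along the solution `X = X(z)` (`ratio_gt_of_crossPoly_neg`).

The contiguous relations `2 z g' = f - g` and `(1 - z) f' + (m₂ + m₃ + 1/2) f = (a b / 2) g` give
the Riccati equation `2 z (1 - z) X' = (1 - z) - (1 - (a + b) z) X - a b z X²`, and two
first-crossing arguments finish the proof.

* For `m₂ m₃ z ≤ 3/5` the Riccati equation gives `f ≥ (1 + m₂ m₃ z) g` (`phase_one`), and this
  bound already makes the quantity negative (`crossPoly_neg_of_small`).
* For `3/5 ≤ m₂ m₃ z ≤ 11/4`, suppose that `crossPoly` vanishes. Then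
  `z = (a - X)(b - X) / ((r X - a)(r X - b))`, which forces `3/10 ≤ X < 2/3`; substituting this `z`
  shows that the derivative of `crossPoly` along the solution has the sign of a polynomial in
  `a, b, X`, which is negative on that range (`cross_deriv_neg`). So `crossPoly` cannot become
  nonnegative.

The polynomial inequalities in `a, b ≥ 17` and in a variable of a bounded interval are proved by
the substitutions `a = 17 + u`, `b = 17 + v` and `X = (lo + hi s) / (1 + s)`, after which all
coefficients have the same sign.
-/

/-- The Gauss hypergeometric polynomial `F(-m, -n; 1/2; z)`. -/
noncomputable def F12 (m n : ℕ) (z : ℝ) : ℝ :=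
  (m.factorial : ℝ) * (n.factorial : ℝ) *
    ∑ j ∈ Finset.range (min m n + 1),
      (4 : ℝ) ^ j * z ^ j /
        (((m - j).factorial : ℝ) * ((n - j).factorial : ℝ) * ((2 * j).factorial : ℝ))

/-- The Gauss hypergeometric polynomial `F(-m, -n; 3/2; z)`. -/
noncomputable def F32 (m n : ℕ) (z : ℝ) : ℝ :=
  (m.factorial : ℝ) * (n.factorial : ℝ) *
    ∑ j ∈ Finset.range (min m n + 1),
      (4 : ℝ) ^ j * z ^ j /
        (((m - j).factorial : ℝ) * ((n - j).factorial : ℝ) * ((2 * j + 1).factorial : ℝ))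

open Polynomial

/-! ### Polynomial inequalities -/

set_option maxRecDepth 100000 in
set_option maxHeartbeats 2000000 in
/-- The homogenization in `(X, w)` of the polynomial deciding the sign of the derivative at a
crossing is negative for `X / w` in `[3/10, 2/3)`, parametrized by `s`. -/
lemma cross_neg_shift (u v s : ℝ) (hu : 0 ≤ u) (hv : 0 ≤ v) (hs : 0 ≤ s) (a b X w r N D : ℝ)
    (ha : a = 17 + u) (hb : b = 17 + v) (hX : X = 3 / 10 + 2 / 3 * s) (hw : w = 1 + s)
    (hr : r = a * b + 1) (hN : N = (a * w - X) * (b * w - X))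
    (hD : D = (r * X - a * w) * (r * X - b * w)) :
    0 < -(2 * N * (D - N) * D + (r - 1) * (-(a + b) * r * X ^ 2 + 2 * a * b * (r + 1) * X * w
      - a * b * (a + b) * w ^ 2) *
        ((D - N) * w ^ 2 - (D - (a + b) * N) * X * w - a * b * N * X ^ 2)) := by
  subst hN hD hr ha hb hX hw
  ring_nf
  positivity

lemma upper_aux (u v : ℝ) (hu : 0 ≤ u) (hv : 0 ≤ v) (a b r : ℝ)
    (ha : a = 17 + u) (hb : b = 17 + v) (hr : r = a * b + 1) :
    (a - 1) * (b - 1) * ((a - 2 / 3) * (b - 2 / 3)) <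
      12 / 5 * ((r * (2 / 3) - a) * (r * (2 / 3) - b)) := by
  rw [← sub_pos]
  subst hr ha hb
  ring_nf
  positivity

lemma lower_aux (u v : ℝ) (hu : 0 ≤ u) (hv : 0 ≤ v) (a b r : ℝ)
    (ha : a = 17 + u) (hb : b = 17 + v) (hr : r = a * b + 1) :
    11 * ((r * (3 / 10) - a) * (r * (3 / 10) - b)) <
      (a - 1) * (b - 1) * ((a - 3 / 10) * (b - 3 / 10)) := by
  rw [← sub_pos]
  subst hr ha hb
  ring_nf
  positivity

/-- Homogenized cubic of `start_pos`, for `x / w` in `[0, 5/8)` parametrized by `s`. -/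
lemma start_aux (u v s : ℝ) (hu : 0 ≤ u) (hv : 0 ≤ v) (hs : 0 ≤ s) (a b r k x w : ℝ)
    (ha : a = 17 + u) (hb : b = 17 + v) (hr : r = a * b + 1) (hk : k = (a - 1) * (b - 1) / 4)
    (hx : x = 5 / 8 * s) (hw : w = 1 + s) :
    0 < a * b * (k * w - x) * (w + x) ^ 2 + (a + b) * (r * x - k * w) * (w + x) * w
      - r ^ 2 * x * w ^ 2 + k * w ^ 3 := by
  subst hx hw hk hr ha hb
  ring_nf
  positivity

lemma cross_neg (a b X r N D : ℝ) (ha : 17 ≤ a) (hb : 17 ≤ b) (hX0 : 3 / 10 ≤ X) (hX1 : X < 2 / 3)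
    (hr : r = a * b + 1) (hN : N = (a - X) * (b - X)) (hD : D = (r * X - a) * (r * X - b)) :
    2 * N * (D - N) * D + (r - 1) * (-(a + b) * r * X ^ 2 + 2 * a * b * (r + 1) * X
      - a * b * (a + b)) * ((D - N) - (D - (a + b) * N) * X - a * b * N * X ^ 2) < 0 := by
  have hq : 0 < 2 / 3 - X := by linarith
  have hs : 0 ≤ (X - 3 / 10) / (2 / 3 - X) := div_nonneg (by linarith) hq.le
  have hw : 0 < 1 + (X - 3 / 10) / (2 / 3 - X) := by linarith
  have hXw : 3 / 10 + 2 / 3 * ((X - 3 / 10) / (2 / 3 - X))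
      = X * (1 + (X - 3 / 10) / (2 / 3 - X)) := by
    linear_combination div_mul_cancel₀ (X - 3 / 10) hq.ne'
  have key := cross_neg_shift (a - 17) (b - 17) _ (by linarith) (by linarith) hs a b _ _ r _ _
    (by ring) (by ring) rfl rfl hr rfl rfl
  rw [hXw] at key
  generalize 1 + (X - 3 / 10) / (2 / 3 - X) = w at key hw
  have hw6 : 0 < w ^ 6 := by positivity
  subst hN hD
  refine neg_pos.mp ((mul_pos_iff_of_pos_left hw6).mp ?_)
  refine lt_of_lt_of_eq key ?_
  ring

lemma start_pos (a b r k x : ℝ) (ha : 17 ≤ a) (hb : 17 ≤ b) (hr : r = a * b + 1)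
    (hk : k = (a - 1) * (b - 1) / 4) (hx0 : 0 ≤ x) (hx1 : x < 5 / 8) :
    0 < a * b * (k - x) * (1 + x) ^ 2 + (a + b) * (r * x - k) * (1 + x) - r ^ 2 * x + k := by
  have hq : 0 < 5 / 8 - x := by linarith
  have hs : 0 ≤ x / (5 / 8 - x) := div_nonneg hx0 hq.le
  have hw : 0 < 1 + x / (5 / 8 - x) := by linarith
  have hXw : 5 / 8 * (x / (5 / 8 - x)) = x * (1 + x / (5 / 8 - x)) := by
    linear_combination div_mul_cancel₀ x hq.ne'
  have key := start_aux (a - 17) (b - 17) _ (by linarith) (by linarith) hs a b r k _ _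
    (by ring) (by ring) hr hk rfl rfl
  rw [hXw] at key
  generalize 1 + x / (5 / 8 - x) = w at key hw
  have hw3 : 0 < w ^ 3 := by positivity
  refine (mul_pos_iff_of_pos_left hw3).mp ?_
  refine lt_of_lt_of_eq key ?_
  ring

/-! ### The curve `X = H(z)` -/

/-- The quadratic in `X` with positive root `H(z)`, written so that its dependence on `z` is
visibly linear; here `r = a b + 1`. -/
def crossPoly (a b r z X : ℝ) : ℝ :=
  z * ((r * X - a) * (r * X - b)) - (a - X) * (b - X)

/-- On the curve `crossPoly = 0` with `z` in the middle range, `X` lies in `[3/10, 2/3)`. -/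
lemma cross_range (a b r z X : ℝ) (ha : 17 ≤ a) (hab : a ≤ b) (hr : r = a * b + 1)
    (hX0 : 0 < X) (hX1 : X ≤ 1) (hz0 : 12 / 5 ≤ (a - 1) * (b - 1) * z)
    (hz1 : (a - 1) * (b - 1) * z ≤ 11) (hc : crossPoly a b r z X = 0) :
    0 < (r * X - a) * (r * X - b) ∧ 3 / 10 ≤ X ∧ X < 2 / 3 := by
  unfold crossPoly at hc
  have hk : 256 ≤ (a - 1) * (b - 1) := by nlinarith
  have hz : 0 < z := by
    by_contra h
    nlinarith
  have hz2 : z < 1 := by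
    by_contra h
    nlinarith
  have hN : 0 < (a - X) * (b - X) := mul_pos (by linarith) (by linarith)
  have hD : 0 < (r * X - a) * (r * X - b) := by
    refine (mul_pos_iff_of_pos_left hz).mp ?_
    linarith
  have hr0 : 0 < r := by nlinarith
  -- Since `z < 1`, the denominator exceeds the numerator; this singles out the larger root.
  have hlt : (a - X) * (b - X) < (r * X - a) * (r * X - b) := by nlinarith
  have hlarge : a + b < (r + 1) * X := by
    have h1 : 0 < (r - 1) * X * ((r + 1) * X - (a + b)) := by nlinarith
    have h2 : 0 < (r - 1) * X := mul_pos (by nlinarith) hX0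
    linarith [(mul_pos_iff_of_pos_left h2).mp h1]
  have hra : a < r * X := by nlinarith
  have hrb : b < r * X := by
    by_contra h
    nlinarith
  refine ⟨hD, ?_, ?_⟩
  · by_contra! h
    have h1 := lower_aux (a - 17) (b - 17) (by linarith) (by linarith) a b r (by ring) (by ring) hr
    have h2 : (r * X - a) * (r * X - b) ≤ (r * (3 / 10) - a) * (r * (3 / 10) - b) := by
      have : r * X ≤ r * (3 / 10) := by nlinarith
      apply mul_le_mul <;> linarith
    have h3 : (a - 3 / 10) * (b - 3 / 10) ≤ (a - X) * (b - X) := by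
      apply mul_le_mul <;> linarith
    have h4 : (a - 1) * (b - 1) * ((a - X) * (b - X)) =
        (a - 1) * (b - 1) * z * ((r * X - a) * (r * X - b)) := by
      linear_combination -((a - 1) * (b - 1)) * hc
    nlinarith
  · by_contra! h
    have h1 := upper_aux (a - 17) (b - 17) (by linarith) (by linarith) a b r (by ring) (by ring) hr
    have h2 : (r * (2 / 3) - a) * (r * (2 / 3) - b) ≤ (r * X - a) * (r * X - b) := by
      have : r * (2 / 3) ≤ r * X := by nlinarith
      have : b ≤ r * (2 / 3) := by nlinarith
      apply mul_le_mul <;> linarith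
    have h3 : (a - X) * (b - X) ≤ (a - 2 / 3) * (b - 2 / 3) := by
      apply mul_le_mul <;> linarith
    have h4 : (a - 1) * (b - 1) * ((a - X) * (b - X)) =
        (a - 1) * (b - 1) * z * ((r * X - a) * (r * X - b)) := by
      linear_combination -((a - 1) * (b - 1)) * hc
    nlinarith

/-- At a zero of `crossPoly`, its derivative along a solution of the Riccati equation
(`X'` standing for the derivative of `X`) is negative. -/
lemma cross_deriv_neg (a b r z X X' : ℝ) (ha : 17 ≤ a) (hab : a ≤ b) (hr : r = a * b + 1)
    (hX0 : 0 < X) (hX1 : X ≤ 1) (hz0 : 12 / 5 ≤ (a - 1) * (b - 1) * z)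
    (hz1 : (a - 1) * (b - 1) * z ≤ 11) (hc : crossPoly a b r z X = 0)
    (hode : 2 * z * (1 - z) * X' = (1 - z) - (1 - (a + b) * z) * X - a * b * z * X ^ 2) :
    (r * X - a) * (r * X - b) +
      (z * (2 * r ^ 2 * X - (a + b) * r) - (2 * X - (a + b))) * X' < 0 := by
  obtain ⟨hD, h3, h4⟩ := cross_range a b r z X ha hab hr hX0 hX1 hz0 hz1 hc
  have hneg := cross_neg a b X r _ _ ha (ha.trans hab) h3 h4 hr rfl rfl
  unfold crossPoly at hc
  have hk : 256 ≤ (a - 1) * (b - 1) := by nlinarith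
  have hz : 0 < z := by
    by_contra h
    nlinarith
  have hz2 : z < 1 := by
    by_contra h
    nlinarith
  generalize hDD : (r * X - a) * (r * X - b) = D at *
  generalize hNN : (a - X) * (b - X) = N at *
  have hzD : N = z * D := by linarith
  have hpos : 0 < D ^ 2 * (2 * z * (1 - z)) := by
    have : 0 < 1 - z := by linarith
    positivity
  refine neg_of_mul_neg_right (a := D ^ 2 * (2 * z * (1 - z))) ?_ hpos.le
  refine lt_of_eq_of_lt ?_ hneg
  -- The Wronskian `N D' - D N'` in `X` of numerator and denominator.
  have hW : (r - 1) * (-(a + b) * r * X ^ 2 + 2 * a * b * (r + 1) * X - a * b * (a + b)) =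
      N * (2 * r ^ 2 * X - (a + b) * r) - D * (2 * X - (a + b)) := by
    rw [← hDD, ← hNN]
    ring
  rw [hW, hzD]
  linear_combination D ^ 2 * (z * (2 * r ^ 2 * X - (a + b) * r) - (2 * X - (a + b))) * hode

/-- The bound `X ≤ 1 / (1 + k z)` suffices when `k z ≤ 3/5`. -/
lemma crossPoly_neg_of_small (a b r k z X : ℝ) (ha : 17 ≤ a) (hb : 17 ≤ b) (hr : r = a * b + 1)
    (hk : k = (a - 1) * (b - 1) / 4) (hz0 : 0 ≤ z) (hz1 : k * z ≤ 3 / 5)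
    (hX0 : 0 < X) (hX : (1 + k * z) * X ≤ 1) : crossPoly a b r z X < 0 := by
  have hk64 : 64 ≤ k := by nlinarith
  have h := start_pos a b r k (k * z) ha hb hr hk (by positivity) (by linarith)
  have hS : 0 < a * b * (1 - z) * (1 + k * z) ^ 2 + (a + b) * (r * z - 1) * (1 + k * z)
      - r ^ 2 * z + 1 := by
    refine (mul_pos_iff_of_pos_left (by linarith : 0 < k)).mp ?_
    refine lt_of_lt_of_eq h ?_
    ring
  have hz : z < 1 / 100 := by nlinarith
  obtain ⟨Q, hQ⟩ : ∃ Q, Q = 1 / X := ⟨_, rfl⟩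
  have hQX : Q * X = 1 := by
    rw [hQ]
    field_simp
  have hq1 : 1 ≤ 1 + k * z := by nlinarith
  have hqQ : 1 + k * z ≤ Q := by
    rw [hQ, le_div_iff₀ hX0]
    exact hX
  generalize 1 + k * z = q at *
  have hmono : 0 ≤ (Q - q) * (a * b * (1 - z) * (Q + q) + (a + b) * (r * z - 1)) := by
    refine mul_nonneg (by linarith) ?_
    have hr0 : 0 ≤ r * z := by
      have : 0 < r := by nlinarith
      positivity
    have h1 : a * b * (99 / 100) * 2 ≤ a * b * (1 - z) * (Q + q) := by
      have : 0 ≤ a * b := by nlinarith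
      have : (99 / 100 : ℝ) * 2 ≤ (1 - z) * (Q + q) := by
        apply mul_le_mul <;> linarith
      nlinarith
    nlinarith
  have hSQ : 0 < a * b * (1 - z) * Q ^ 2 + (a + b) * (r * z - 1) * Q - r ^ 2 * z + 1 := by
    linarith
  have hfin : crossPoly a b r z X = -(X ^ 2 *
      (a * b * (1 - z) * Q ^ 2 + (a + b) * (r * z - 1) * Q - r ^ 2 * z + 1)) := by
    unfold crossPoly
    linear_combination (a * b * (1 - z) * (Q * X + 1) + (a + b) * (r * z - 1) * X) * hQX
  rw [hfin]
  have : 0 < X ^ 2 := by positivity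
  nlinarith [mul_pos this hSQ]

/-- Negativity of the quadratic at `X` means that `X` lies below its positive root `H(z)`. -/
lemma ratio_gt_of_crossPoly_neg (m n r z f g : ℝ) (hr : r = (2 * m + 1) * (2 * n + 1) + 1)
    (hf : 0 < f) (hg : 0 < g) (hA : 0 < r ^ 2 * z - 1)
    (h : crossPoly (2 * m + 1) (2 * n + 1) r z (g / f) < 0) :
    f / g > 1 / (((m + n + 1) * (r * z - 1) + Real.sqrt (((n - m) * (r * z - 1)) ^ 2 +
          (2 * m + 1) ^ 3 * (2 * n + 1) ^ 3 * z)) / (r ^ 2 * z - 1)) := by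
  have hX : 0 < g / f := by positivity
  have hfg : f / g = 1 / (g / f) := by rw [one_div_div]
  rw [hfg]
  generalize g / f = X at *
  apply one_div_lt_one_div_of_lt hX
  rw [lt_div_iff₀ hA]
  have hs : X * (r ^ 2 * z - 1) - (m + n + 1) * (r * z - 1) <
      Real.sqrt (((n - m) * (r * z - 1)) ^ 2 + (2 * m + 1) ^ 3 * (2 * n + 1) ^ 3 * z) := by
    apply Real.lt_sqrt_of_sq_lt
    have h2 := mul_neg_of_pos_of_neg hA h
    rw [← sub_neg]
    refine lt_of_eq_of_lt ?_ h2
    unfold crossPoly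
    rw [hr]
    ring
  linarith

/-! ### The hypergeometric polynomials and their contiguous relations -/

/-- Coefficient of `z ^ j` in `F(-m, -n; 1/2; z)`; it vanishes for `j > min m n`. -/
noncomputable def coef (m n j : ℕ) : ℝ :=
  (m.descFactorial j : ℝ) * (n.descFactorial j : ℝ) * 4 ^ j / ((2 * j).factorial : ℝ)

lemma coef_zero (m n : ℕ) : coef m n 0 = 1 := by simp [coef]

lemma coef_eq_zero {m n j : ℕ} (h : min m n < j) : coef m n j = 0 := by
  rcases min_lt_iff.mp h with h | h <;> simp [coef, Nat.descFactorial_of_lt h]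

lemma cast_descFactorial_succ (m j : ℕ) :
    ((m.descFactorial (j + 1) : ℕ) : ℝ) = ((m : ℝ) - j) * (m.descFactorial j : ℝ) := by
  rw [Nat.descFactorial_succ]
  rcases le_or_gt j m with h | h
  · push_cast [Nat.cast_sub h]
    ring
  · simp [Nat.descFactorial_of_lt h]

lemma coef_succ (m n j : ℕ) :
    ((j : ℝ) + 1) * (2 * j + 1) * coef m n (j + 1) = 2 * (m - j) * (n - j) * coef m n j := by
  have hfac : (((2 * (j + 1)).factorial : ℕ) : ℝ) =
      (2 * j + 2) * (2 * j + 1) * ((2 * j).factorial : ℝ) := by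
    rw [show 2 * (j + 1) = (2 * j + 1) + 1 by ring, Nat.factorial_succ, Nat.factorial_succ]
    push_cast
    ring
  have h0 : ((2 * j).factorial : ℝ) ≠ 0 := by positivity
  have h1 : (2 * (j : ℝ) + 1) ≠ 0 := by positivity
  have h2 : (2 * (j : ℝ) + 2) ≠ 0 := by positivity
  unfold coef
  rw [hfac, cast_descFactorial_succ, cast_descFactorial_succ, pow_succ]
  field_simp
  ring

/-- `F(-m, -n; 1/2; z)` as a polynomial. -/
noncomputable def fPoly (m n : ℕ) : ℝ[X] :=
  ∑ j ∈ Finset.range (min m n + 1), C (coef m n j) * X ^ j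

/-- `F(-m, -n; 3/2; z)` as a polynomial. -/
noncomputable def gPoly (m n : ℕ) : ℝ[X] :=
  ∑ j ∈ Finset.range (min m n + 1), C (coef m n j / (2 * j + 1)) * X ^ j

lemma fPoly_coeff (m n j : ℕ) : (fPoly m n).coeff j = coef m n j := by
  simp only [fPoly, finsetSum_coeff, coeff_C_mul, coeff_X_pow, mul_ite, mul_one, mul_zero,
    Finset.sum_ite_eq, Finset.mem_range]
  split_ifs with h
  · rfl
  · exact (coef_eq_zero (by omega)).symm

lemma gPoly_coeff (m n j : ℕ) : (gPoly m n).coeff j = coef m n j / (2 * j + 1) := by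
  simp only [gPoly, finsetSum_coeff, coeff_C_mul, coeff_X_pow, mul_ite, mul_one, mul_zero,
    Finset.sum_ite_eq, Finset.mem_range]
  split_ifs with h
  · rfl
  · rw [coef_eq_zero (by omega), zero_div]

lemma factorial_div_eq {m j : ℕ} (h : j ≤ m) :
    (m.factorial : ℝ) = ((m - j).factorial : ℝ) * (m.descFactorial j : ℝ) := by
  exact_mod_cast (Nat.factorial_mul_descFactorial h).symm

lemma F12_eq (m n : ℕ) (z : ℝ) : F12 m n z = (fPoly m n).eval z := by
  simp only [F12, fPoly, eval_finsetSum, eval_mul, eval_C, eval_pow, eval_X, Finset.mul_sum]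
  refine Finset.sum_congr rfl fun j hj => ?_
  have hj := Finset.mem_range.mp hj
  rw [factorial_div_eq (m := m) (j := j) (by omega), factorial_div_eq (m := n) (j := j) (by omega),
    coef]
  have h1 : ((m - j).factorial : ℝ) ≠ 0 := by positivity
  have h2 : ((n - j).factorial : ℝ) ≠ 0 := by positivity
  field_simp

lemma F32_eq (m n : ℕ) (z : ℝ) : F32 m n z = (gPoly m n).eval z := by
  simp only [F32, gPoly, eval_finsetSum, eval_mul, eval_C, eval_pow, eval_X, Finset.mul_sum]
  refine Finset.sum_congr rfl fun j hj => ?_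
  have hj := Finset.mem_range.mp hj
  rw [factorial_div_eq (m := m) (j := j) (by omega), factorial_div_eq (m := n) (j := j) (by omega),
    coef, Nat.factorial_succ]
  have h1 : ((m - j).factorial : ℝ) ≠ 0 := by positivity
  have h2 : ((n - j).factorial : ℝ) ≠ 0 := by positivity
  push_cast
  field_simp

lemma coef_nonneg (m n j : ℕ) : 0 ≤ coef m n j := by
  unfold coef
  positivity

lemma gPoly_pos (m n : ℕ) {z : ℝ} (hz : 0 ≤ z) : 0 < (gPoly m n).eval z := by
  simp only [gPoly, eval_finsetSum, eval_mul, eval_C, eval_pow, eval_X]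
  refine Finset.sum_pos' (fun j _ => ?_) ⟨0, by simp, by simp [coef_zero]⟩
  have := coef_nonneg m n j
  positivity

lemma gPoly_le_fPoly (m n : ℕ) {z : ℝ} (hz : 0 ≤ z) :
    (gPoly m n).eval z ≤ (fPoly m n).eval z := by
  simp only [gPoly, fPoly, eval_finsetSum, eval_mul, eval_C, eval_pow, eval_X]
  refine Finset.sum_le_sum fun j _ => ?_
  refine mul_le_mul_of_nonneg_right (div_le_self (coef_nonneg m n j) ?_) (by positivity)
  have : (0 : ℝ) ≤ j := by positivity
  linarith

lemma gPoly_ode (m n : ℕ) (z : ℝ) :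
    2 * z * (derivative (gPoly m n)).eval z = (fPoly m n).eval z - (gPoly m n).eval z := by
  have h : C 2 * (X * derivative (gPoly m n)) = fPoly m n - gPoly m n := by
    ext j
    rw [coeff_C_mul, coeff_sub, fPoly_coeff, gPoly_coeff]
    rcases j with _ | j
    · simp
    · rw [coeff_X_mul, coeff_derivative, gPoly_coeff]
      have : (2 * ((j + 1 : ℕ) : ℝ) + 1) ≠ 0 := by positivity
      push_cast at this ⊢
      field_simp
      ring
  have := congrArg (eval z) h
  simp only [eval_mul, eval_C, eval_X, eval_sub] at this
  linarith

lemma fPoly_ode (m n : ℕ) (z : ℝ) :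
    2 * (1 - z) * (derivative (fPoly m n)).eval z =
      (2 * m + 1) * (2 * n + 1) * (gPoly m n).eval z
        - (2 * m + 2 * n + 1) * (fPoly m n).eval z := by
  have h : C 2 * (derivative (fPoly m n) - X * derivative (fPoly m n)) =
      C ((2 * m + 1) * (2 * n + 1) : ℝ) * gPoly m n - C (2 * m + 2 * n + 1 : ℝ) * fPoly m n := by
    ext j
    rw [coeff_C_mul, coeff_sub, coeff_sub, coeff_C_mul, coeff_C_mul, fPoly_coeff, gPoly_coeff,
      coeff_derivative, fPoly_coeff]
    have hX : (X * derivative (fPoly m n)).coeff j = j * coef m n j := by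
      rcases j with _ | j
      · simp
      · rw [coeff_X_mul, coeff_derivative, fPoly_coeff]
        push_cast
        ring
    rw [hX]
    have h1 : (2 * (j : ℝ) + 1) ≠ 0 := by positivity
    have hs := coef_succ m n j
    field_simp
    linear_combination 2 * hs
  have := congrArg (eval z) h
  simp only [eval_mul, eval_C, eval_X, eval_sub] at this
  linarith

/-! ### First-crossing arguments -/

lemma barrier (φ φ' : ℝ → ℝ) (a b : ℝ) (hab : a ≤ b)
    (hd : ∀ x ∈ Set.Icc a b, HasDerivAt φ (φ' x) x) (h0 : φ a < 0)
    (hc : ∀ x ∈ Set.Icc a b, φ x = 0 → φ' x < 0) : φ b < 0 := by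
  have hle : ∀ x ∈ Set.Icc a b, φ x ≤ 0 := by
    intro x hx
    exact image_le_of_deriv_right_lt_deriv_boundary (f := φ) (f' := φ') (B := fun _ => 0)
      (B' := fun _ => 0) (fun y hy => (hd y hy).continuousAt.continuousWithinAt)
      (fun y hy => (hd y (Set.Ico_subset_Icc_self hy)).hasDerivWithinAt) h0.le
      (fun y => hasDerivAt_const y _) (fun y hy => hc y (Set.Ico_subset_Icc_self hy)) hx
  have hb : b ∈ Set.Icc a b := ⟨hab, le_rfl⟩
  refine lt_of_le_of_ne (hle b hb) fun hzero => ?_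
  have hlt : a < b := lt_of_le_of_ne hab fun h => by
    rw [h] at h0
    linarith
  -- A zero at `b` with negative slope would force positive values just to the left of `b`.
  have hslope := (hasDerivAt_iff_tendsto_slope_left_right.mp (hd b hb)).1
  have hev := hslope.eventually (gt_mem_nhds (hc b hb hzero))
  obtain ⟨x, hx, hxa, hxb⟩ := (hev.and (Ioo_mem_nhdsLT hlt)).exists
  have hx0 := hle x ⟨hxa.le, hxb.le⟩
  rw [slope_def_field, hzero] at hx
  have : 0 ≤ (φ x - 0) / (x - b) := div_nonneg_of_nonpos (by linarith) (by linarith)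
  linarith

/-- The lower bound `f / g ≥ 1 + m n z` for small `z`; the comparison function touches at `z = 0`
with a strictly smaller slope. -/
lemma phase_one (m n : ℕ) (hm : 8 ≤ m) (hn : 8 ≤ n) (z : ℝ) (hz0 : 0 ≤ z)
    (hz1 : (m : ℝ) * n * z ≤ 3 / 5) :
    (1 + (m : ℝ) * n * z) * (gPoly m n).eval z ≤ (fPoly m n).eval z := by
  have hm' : (8 : ℝ) ≤ m := by exact_mod_cast hm
  have hn' : (8 : ℝ) ≤ n := by exact_mod_cast hn
  have hk : (64 : ℝ) ≤ m * n := by nlinarith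
  have hd : ∀ x : ℝ, HasDerivAt
      (fun x : ℝ => (1 + (m : ℝ) * n * x) * (gPoly m n).eval x - (fPoly m n).eval x)
      ((m : ℝ) * n * (gPoly m n).eval x + (1 + (m : ℝ) * n * x) * (derivative (gPoly m n)).eval x
        - (derivative (fPoly m n)).eval x) x := by
    intro x
    have h1 : HasDerivAt (fun x : ℝ => 1 + (m : ℝ) * n * x) ((m : ℝ) * n) x := by
      simpa using ((hasDerivAt_id x).const_mul ((m : ℝ) * n)).const_add 1
    exact (h1.mul ((gPoly m n).hasDerivAt x)).sub ((fPoly m n).hasDerivAt x)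
  have key := image_le_of_deriv_right_lt_deriv_boundary (a := 0) (b := z) (B := fun _ => 0)
      (B' := fun _ => 0) (fun y _ => (hd y).continuousAt.continuousWithinAt)
      (fun y _ => (hd y).hasDerivWithinAt) ?_ (fun y => hasDerivAt_const y _) ?_
      (x := z) ⟨hz0, le_rfl⟩
  · linarith
  · simp [← coeff_zero_eq_eval_zero, fPoly_coeff, gPoly_coeff, coef_zero]
  · intro x hx hx0
    rcases hx.1.eq_or_lt with h | hxp
    · -- At `z = 0` the Riccati equation is singular, so the slope is read off the coefficients.
      subst h
      have hc1 : coef m n 1 = 2 * m * n := by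
        have := coef_succ m n 0
        rw [coef_zero] at this
        norm_num at this
        linarith
      simp only [← coeff_zero_eq_eval_zero, coeff_derivative, fPoly_coeff, gPoly_coeff, coef_zero,
        hc1]
      norm_num
      linarith
    · have hg := gPoly_pos m n hxp.le
      have e1 := gPoly_ode m n x
      have e2 := fPoly_ode m n x
      generalize (gPoly m n).eval x = g at *
      generalize (fPoly m n).eval x = f at *
      generalize (derivative (gPoly m n)).eval x = g' at *
      generalize (derivative (fPoly m n)).eval x = f' at *
      have hkx : (m : ℝ) * n * x ≤ 3 / 5 := by
        have : (m : ℝ) * n * x ≤ m * n * z := mul_le_mul_of_nonneg_left hx.2.le (by positivity)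
        linarith
      have hx1 : x < 1 := by nlinarith
      have hpos : 0 < 2 * x * (1 - x) := mul_pos (by linarith) (by linarith)
      refine neg_of_mul_neg_right (a := 2 * x * (1 - x)) ?_ hpos.le
      have hf : f = (1 + (m : ℝ) * n * x) * g := by linarith
      have hkpos : 0 < (m : ℝ) * n - m * n * (m * n * x) - (2 * m + 2 * n - 2) * (m * n * x)
          + (m * n * x) ^ 2 := by
        have h1 : (2 * (m : ℝ) + 2 * n - 2) * (m * n * x) ≤ (2 * m + 2 * n - 2) * (3 / 5) :=
          mul_le_mul_of_nonneg_left hkx (by linarith)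
        have h2 : (m : ℝ) * n * (m * n * x) ≤ m * n * (3 / 5) :=
          mul_le_mul_of_nonneg_left hkx (by linarith)
        nlinarith [sq_nonneg ((m : ℝ) * n * x), mul_nonneg (sub_nonneg.2 hm') (sub_nonneg.2 hn')]
      have hfin : 2 * x * (1 - x) * ((m : ℝ) * n * g + (1 + m * n * x) * g' - f') =
          -(g * x * (m * n - m * n * (m * n * x) - (2 * m + 2 * n - 2) * (m * n * x)
          + (m * n * x) ^ 2)) := by
        subst hf
        linear_combination (1 - x) * (1 + m * n * x) * e1 - x * e2
      rw [hfin]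
      have := mul_pos (mul_pos hg hxp) hkpos
      linarith

/-- Section 4.1: the HFRI for `m₃ ≥ m₂ ≥ 8` and `1/r² < z ≤ 2.75/(m₂m₃)`:
`F(−m₂,−m₃;1/2;z) / F(−m₂,−m₃;3/2;z) > 1 / H(z)`. -/
theorem stmt_15 (m2 m3 : ℕ) (h8 : 8 ≤ m2) (h23 : m2 ≤ m3) (z : ℝ) :
    let r : ℝ := (2 * m2 + 1) * (2 * m3 + 1) + 1
    let H : ℝ → ℝ := fun w =>
      (((m2 : ℝ) + m3 + 1) * (r * w - 1) +
        Real.sqrt ((((m3 : ℝ) - m2) * (r * w - 1)) ^ 2 +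
          (2 * (m2 : ℝ) + 1) ^ 3 * (2 * (m3 : ℝ) + 1) ^ 3 * w)) / (r ^ 2 * w - 1)
    1 / r ^ 2 < z → z ≤ 2.75 / ((m2 : ℝ) * m3) →
      F12 m2 m3 z / F32 m2 m3 z > 1 / H z := by
  intro r H hz0 hz1
  have hm : (8 : ℝ) ≤ m2 := by exact_mod_cast h8
  have hmn : (m2 : ℝ) ≤ m3 := by exact_mod_cast h23
  have hk : (64 : ℝ) ≤ m2 * m3 := by nlinarith
  have hr : r = (2 * (m2 : ℝ) + 1) * (2 * m3 + 1) + 1 := rfl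
  have hrpos : 0 < r := by rw [hr]; positivity
  have hr2 : 0 < r ^ 2 := by positivity
  have hA : 0 < r ^ 2 * z - 1 := by
    rw [div_lt_iff₀ hr2] at hz0
    linarith
  have hzpos : 0 < z := lt_trans (by positivity) hz0
  have hz1' : (m2 : ℝ) * m3 * z ≤ 11 / 4 := by
    rw [le_div_iff₀ (by linarith)] at hz1
    norm_num at hz1
    linarith
  have hgpos : ∀ x : ℝ, 0 ≤ x → 0 < (gPoly m2 m3).eval x := fun x hx => gPoly_pos m2 m3 hx
  have hfpos : ∀ x : ℝ, 0 ≤ x → 0 < (fPoly m2 m3).eval x := fun x hx =>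
    (hgpos x hx).trans_le (gPoly_le_fPoly m2 m3 hx)
  rw [F12_eq, F32_eq]
  refine ratio_gt_of_crossPoly_neg m2 m3 r z _ _ hr (hfpos z hzpos.le) (hgpos z hzpos.le) hA ?_
  have hkk : (m2 : ℝ) * m3 = (2 * (m2 : ℝ) + 1 - 1) * (2 * m3 + 1 - 1) / 4 := by ring
  have hsmall : ∀ x : ℝ, 0 ≤ x → (m2 : ℝ) * m3 * x ≤ 3 / 5 →
      crossPoly (2 * m2 + 1) (2 * m3 + 1) r x ((gPoly m2 m3).eval x / (fPoly m2 m3).eval x) < 0 := by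
    intro x hx hx1
    refine crossPoly_neg_of_small _ _ r (m2 * m3) x _ (by linarith) (by linarith) hr hkk hx hx1
      (div_pos (hgpos x hx) (hfpos x hx)) ?_
    rw [← mul_div_assoc, div_le_one (hfpos x hx)]
    exact phase_one m2 m3 h8 (h8.trans h23) x hx hx1
  rcases le_total ((m2 : ℝ) * m3 * z) (3 / 5) with h | h
  · exact hsmall z hzpos.le h
  · have hz0' : 3 / 5 / ((m2 : ℝ) * m3) ≤ z := by
      rw [div_le_iff₀ (by linarith)]
      linarith
    have hstart : (0 : ℝ) < 3 / 5 / (m2 * m3) := by positivity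
    refine barrier (fun x => crossPoly (2 * m2 + 1) (2 * m3 + 1) r x
        ((gPoly m2 m3).eval x / (fPoly m2 m3).eval x))
      (fun x => (r * ((gPoly m2 m3).eval x / (fPoly m2 m3).eval x) - (2 * m2 + 1)) *
          (r * ((gPoly m2 m3).eval x / (fPoly m2 m3).eval x) - (2 * m3 + 1)) +
        (x * (2 * r ^ 2 * ((gPoly m2 m3).eval x / (fPoly m2 m3).eval x)
            - ((2 * m2 + 1) + (2 * m3 + 1)) * r) -
          (2 * ((gPoly m2 m3).eval x / (fPoly m2 m3).eval x) - ((2 * m2 + 1) + (2 * m3 + 1)))) *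
        (((derivative (gPoly m2 m3)).eval x * (fPoly m2 m3).eval x -
          (gPoly m2 m3).eval x * (derivative (fPoly m2 m3)).eval x) / (fPoly m2 m3).eval x ^ 2))
      (3 / 5 / (m2 * m3)) z hz0' ?_ ?_ ?_
    · intro x hx
      have hxp : 0 ≤ x := hstart.le.trans hx.1
      have hX := ((gPoly m2 m3).hasDerivAt x).div ((fPoly m2 m3).hasDerivAt x) (hfpos x hxp).ne'
      have h1 := (hX.const_mul r).sub_const (2 * (m2 : ℝ) + 1)
      have h2 := (hX.const_mul r).sub_const (2 * (m3 : ℝ) + 1)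
      have h3 := hX.const_sub (2 * (m2 : ℝ) + 1)
      have h4 := hX.const_sub (2 * (m3 : ℝ) + 1)
      have h5 := ((hasDerivAt_id x).mul (h1.mul h2)).sub (h3.mul h4)
      refine HasDerivAt.congr_deriv h5 ?_
      simp only [Pi.div_apply, Pi.mul_apply, id]
      ring
    · refine hsmall _ hstart.le (le_of_eq ?_)
      have hm3 : (m3 : ℝ) ≠ 0 := by linarith
      field_simp
    · intro x hx hcx
      have hxp : 0 < x := hstart.trans_le hx.1
      have hf := hfpos x hxp.le
      have hg := hgpos x hxp.le
      have hlo : 3 / 5 ≤ (m2 : ℝ) * m3 * x := by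
        have := hx.1
        rw [div_le_iff₀ (by linarith)] at this
        linarith
      have hhi : (m2 : ℝ) * m3 * x ≤ 11 / 4 :=
        (mul_le_mul_of_nonneg_left hx.2 (by positivity)).trans hz1'
      refine cross_deriv_neg _ _ r x _ _ (by linarith) (by linarith) hr (div_pos hg hf)
        ((div_le_one hf).mpr (gPoly_le_fPoly m2 m3 hxp.le)) (by linarith) (by linarith) hcx ?_
      have e1 := gPoly_ode m2 m3 x
      have e2 := fPoly_ode m2 m3 x
      generalize (gPoly m2 m3).eval x = g at *
      generalize (fPoly m2 m3).eval x = f at *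
      generalize (derivative (gPoly m2 m3)).eval x = g' at *
      generalize (derivative (fPoly m2 m3)).eval x = f' at *
      field_simp
      linear_combination (1 - x) * f * e1 - x * g * e2
end

section
/- Let m2, m3 be positive integers with (2m2−1)(2m3−1) > 2. Then F(−m2−1, −m3; 1/2; 1) − (2m3+1) · [ 2(m2+m3+1) / (2 + (2m2+1)(2m3+1)) ] · F(−m2, −m3; 1/2; 1) < 0. -/
/-- The weight `4^j j!² / (2j)!`, i.e. `j! / (1/2)_j`. -/
noncomputable def weight (j : ℕ) : ℝ :=
  (4 : ℝ) ^ j * (j.factorial : ℝ) ^ 2 / ((2 * j).factorial : ℝ)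

lemma weight_succ (j : ℕ) : weight (j + 1) * (2 * j + 1) = 2 * (j + 1) * weight j := by
  have h1 : ((2 * j).factorial : ℝ) ≠ 0 := by positivity
  have h2 : (2 * (j : ℝ) + 1) ≠ 0 := by positivity
  have h3 : (j : ℝ) + 1 ≠ 0 := by positivity
  have e : 2 * (j + 1) = 2 * j + 1 + 1 := by ring
  have h4 : (2 * (j : ℝ) + 1 + 1) ≠ 0 := by positivity
  unfold weight
  rw [e, Nat.factorial_succ (2 * j + 1), Nat.factorial_succ (2 * j), Nat.factorial_succ j]
  push_cast
  field_simp
  ring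

/-- The real form of `Nat.choose_succ_right_eq`, without truncated subtraction. -/
lemma choose_succ_cast (n k : ℕ) :
    ((n.choose (k + 1) : ℕ) : ℝ) * (k + 1) = (n.choose k : ℝ) * (n - k) := by
  rcases le_or_gt k n with hk | hk
  · have := Nat.choose_succ_right_eq n k
    rw [← Nat.cast_sub hk]
    exact_mod_cast this
  · rw [Nat.choose_eq_zero_of_lt hk, Nat.choose_eq_zero_of_lt (by omega)]
    simp

lemma F12_one (m n : ℕ) :
    F12 m n 1 = ∑ j ∈ Finset.range (n + 1), (m.choose j : ℝ) * (n.choose j : ℝ) * weight j := by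
  unfold F12
  rw [Finset.mul_sum]
  have hsub : Finset.range (min m n + 1) ⊆ Finset.range (n + 1) :=
    Finset.range_mono (by omega)
  rw [← Finset.sum_subset hsub]
  · refine Finset.sum_congr rfl fun j hj => ?_
    have hj' := Finset.mem_range.mp hj
    rw [Nat.cast_choose ℝ (show j ≤ m by omega), Nat.cast_choose ℝ (show j ≤ n by omega)]
    unfold weight
    have h1 : (j.factorial : ℝ) ≠ 0 := by positivity
    field_simp
    simp
  · intro j hj hj'
    rw [Finset.mem_range] at hj hj'
    rw [Nat.choose_eq_zero_of_lt (show m < j by omega)]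
    simp

/-- The factor `n - k` makes the closed form vanish at `k = n`, where the sum is complete. -/
lemma term_telescope (m n k : ℕ) :
    ∑ j ∈ Finset.range (k + 1),
      ((2 * (m : ℝ) + 1) * (((m + 1).choose j : ℝ) * (n.choose j : ℝ) * weight j) -
        (2 * (m : ℝ) + 2 * n + 1) * ((m.choose j : ℝ) * (n.choose j : ℝ) * weight j)) =
      -2 * ((n : ℝ) - k) * ((m.choose k : ℝ) * (n.choose k : ℝ) * weight k) := by
  induction k with
  | zero => simp; ring
  | succ k ih =>
    rw [Finset.sum_range_succ, ih, Nat.choose_succ_succ m k]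
    have hm := choose_succ_cast m k
    have hn := choose_succ_cast n k
    have hw := weight_succ k
    push_cast
    simp only [Nat.succ_eq_add_one]
    linear_combination 2 * (m.choose k : ℝ) * weight k * hn
      + (m.choose k : ℝ) * (n.choose (k + 1) : ℝ) * hw
      - 2 * (n.choose (k + 1) : ℝ) * weight (k + 1) * hm

lemma F12_one_succ (m n : ℕ) :
    (2 * (m : ℝ) + 1) * F12 (m + 1) n 1 = (2 * (m : ℝ) + 2 * n + 1) * F12 m n 1 := by
  have h := term_telescope m n n
  rw [Finset.sum_sub_distrib, ← Finset.mul_sum, ← Finset.mul_sum, ← F12_one, ← F12_one] at h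
  linarith

lemma F12_one_pos (m n : ℕ) : 0 < F12 m n 1 := by
  unfold F12
  refine mul_pos (by positivity) (Finset.sum_pos (fun j _ => by positivity) ⟨0, by simp⟩)

/-- The computation of `G(1) < 0` (Section 4.2): for positive integers `m₂, m₃`
with `(2m₂−1)(2m₃−1) > 2`,
`F(−m₂−1,−m₃;1/2;1) − (2m₃+1)·[2(m₂+m₃+1)/(2+(2m₂+1)(2m₃+1))]·F(−m₂,−m₃;1/2;1) < 0`. -/
theorem stmt_17 (m2 m3 : ℕ) (hm2 : 0 < m2) (hm3 : 0 < m3)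
    (h : (2 * (m2 : ℝ) - 1) * (2 * (m3 : ℝ) - 1) > 2) :
    F12 (m2 + 1) m3 1 -
      (2 * (m3 : ℝ) + 1) *
        (2 * ((m2 : ℝ) + m3 + 1) / (2 + (2 * (m2 : ℝ) + 1) * (2 * (m3 : ℝ) + 1))) *
        F12 m2 m3 1 < 0 := by
  have hF := F12_one_pos m2 m3
  have hr : F12 (m2 + 1) m3 1 =
      (2 * (m2 : ℝ) + 2 * m3 + 1) / (2 * (m2 : ℝ) + 1) * F12 m2 m3 1 := by
    have := F12_one_succ m2 m3
    field_simp
    linarith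
  rw [hr, ← sub_mul]
  refine mul_neg_of_neg_of_pos ?_ hF
  rw [sub_neg, ← mul_div_assoc, div_lt_div_iff₀ (by positivity) (by positivity)]
  nlinarith [h]
end

section
/- Let m2, m3 be integers with m3 ≥ m2 ≥ 8, and let z be a real number with 2.75/(m2·m3) < z < 1. Then (1−z) + (2(m2+m3+1)z − 1) H(z) < (2m2+1)(2m3+1) z H(z)² + 2 z (1−z) H'(z), where H' denotes the derivative of H. -/
/-!
Write `a = 2m₂+1`, `b = 2m₃+1`, `P = ab`, `S = a+b`, `r = P+1` and `h = H(z)`.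

The value `h` is a root of the quadratic `(r²z−1)h² − S(rz−1)h = P(1−z)`, which is linear in `z`:
`z = N/M` with `N = h² − Sh + P` and `M = r²h² − Srh + P`. If `Q` denotes the square root in the
definition of `H`, then implicit differentiation gives `H'(z) = −M/(2Q)`. Substituting both
relations removes `z`, and the claim becomes a polynomial inequality in `P`, `S`, `h`
(`poly_ineq`). For `b ≥ a ≥ 17` it holds as soon as `(P+2)h > S`, which is equivalent to `z < 1`,
and `h ≤ 1/2`, which follows from the lower bound on `z` (`root_le_half`).
-/

set_option maxHeartbeats 1000000 in
/-- The polynomial form of the inequality, after elimination of `z`. With `x = (P+2)h − S`, the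
terms of top order in the difference of the two sides combine to `P S h (1−h)² (P+S) (P h − S)`,
and `P h − S = x − 2h`. -/
lemma poly_ineq (P S h : ℝ) (hS : 34 ≤ S) (hPS : 17 * S ≤ 2 * P) (h0 : 0 < h) (h1 : h ≤ 1 / 2)
    (hx : 0 < (P + 2) * h - S) :
    2 * ((P + 2) * h - S) * (h ^ 2 - S * h + P) * ((P + 1) ^ 2 * h ^ 2 - S * (P + 1) * h + P) <
      (P * h ^ 3 + (P + 1) * (P + 1 - S) * h ^ 2 + (S ^ 2 - S * (P + 1) - 2 * P) * h + P) *
        (-(P + 1) * S * h ^ 2 + 2 * P * (P + 2) * h - P * S) := by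
  have hP : 289 ≤ P := by linarith
  obtain ⟨x, hxe⟩ : ∃ x, x = (P + 2) * h - S := ⟨_, rfl⟩
  rw [← hxe] at hx
  have hSe : P * h = S + x - 2 * h := by rw [hxe]; ring
  have hk : (1 : ℝ) / 4 ≤ (1 - h) ^ 2 := by nlinarith
  have hSk : 0 ≤ S * (1 - h) ^ 2 - 4 := by nlinarith
  have e1 : 0 ≤ P ^ 2 * h * x * (S * (1 - h) ^ 2 - 4) := by positivity
  have e2 : 0 ≤ P * S ^ 2 * h * (1 - h) ^ 2 * x := by positivity
  have e3 : 0 ≤ 2 * P ^ 3 * h ^ 4 * (1 - h) := by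
    have : 0 ≤ 1 - h := by linarith
    positivity
  -- the coefficient of `P S²`, absorbed into `P² S` through `17 S ≤ 2 P`
  have e4 : P * S ^ 2 * (3 * h - 3 * h ^ 2 + 6 * h ^ 3) ≤
      P ^ 2 * S * (2 / 17) * (3 * h - 3 * h ^ 2 + 6 * h ^ 3) := by
    have h3 : 0 ≤ 3 * h - 3 * h ^ 2 + 6 * h ^ 3 := by nlinarith [pow_pos h0 3]
    have : P * S ^ 2 ≤ P ^ 2 * S * (2 / 17) := by
      have := mul_le_mul_of_nonneg_left hPS (show 0 ≤ P * S by positivity)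
      nlinarith
    exact mul_le_mul_of_nonneg_right this h3
  have g3 : h ^ 3 ≤ h ^ 2 / 2 := by nlinarith [pow_pos h0 2]
  have g5 : h ^ 5 ≤ h ^ 4 / 2 := by nlinarith [pow_pos h0 4]
  have p2 : h ^ 2 ≤ 1 / 4 := by nlinarith
  have p3 : h ^ 3 ≤ 1 / 8 := by linarith
  have p4 : h ^ 4 ≤ 1 / 16 := by nlinarith [pow_pos h0 3]
  have p5 : h ^ 5 ≤ 1 / 32 := by linarith
  have q1 : 1 / 10 ≤ 1 - 2 * h + h ^ 2 - h ^ 3 + 7 * h ^ 4 - h ^ 5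
      - (2 / 17) * (3 * h - 3 * h ^ 2 + 6 * h ^ 3) := by
    -- the square absorbs the cubic and quartic terms; `131/1000` nearly minimises the loss in `h ^ 2`
    have hs : 0 ≤ h ^ 4 - 2 * (131 / 1000) * h ^ 3 + (131 / 1000) ^ 2 * h ^ 2 := by
      have := sq_nonneg (h ^ 2 - 131 / 1000 * h)
      linarith
    have hl : 0 ≤ (1 / 2 - h) * (1 / 2 - h) := mul_self_nonneg _
    nlinarith only [hs, hl, h0, h1, g5, g3]
  have e5 : P ^ 2 * S * (1 / 10) ≤ P ^ 2 * S * (1 - 2 * h + h ^ 2 - h ^ 3 + 7 * h ^ 4 - h ^ 5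
      - (2 / 17) * (3 * h - 3 * h ^ 2 + 6 * h ^ 3)) :=
    mul_le_mul_of_nonneg_left q1 (by positivity)
  have e6 : P ^ 2 * (2 * h ^ 3 - 4 * h ^ 4 + 8 * h ^ 5) ≤ P ^ 2 * (1 / 2) :=
    mul_le_mul_of_nonneg_left (by linarith [pow_pos h0 4]) (by positivity)
  have e7 : 0 ≤ P * S * (6 * h ^ 2 - 2 * h ^ 3 + 17 * h ^ 4 - h ^ 5) :=
    mul_nonneg (by positivity) (by linarith [pow_pos h0 2, pow_pos h0 4])
  have e8 : P * (4 * h ^ 3 + 10 * h ^ 5) ≤ P * 1 :=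
    mul_le_mul_of_nonneg_left (by linarith) (by positivity)
  have e9 : 0 ≤ S ^ 3 * (2 * h ^ 2 - h ^ 3) :=
    mul_nonneg (by positivity) (by linarith [pow_pos h0 2])
  have e10 : S ^ 2 * (7 * h ^ 3 - h ^ 4) ≤ S ^ 2 * 1 :=
    mul_le_mul_of_nonneg_left (by linarith [pow_pos h0 4]) (by positivity)
  have e11 : 0 ≤ S * (9 * h ^ 4) := by positivity
  have e12 : S ^ 2 ≤ P ^ 2 := by nlinarith
  have e13 : P ^ 2 * 34 ≤ P ^ 2 * S := mul_le_mul_of_nonneg_left hS (by positivity)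
  have e14 : 289 * P ≤ P ^ 2 := by nlinarith
  have key : (P * h ^ 3 + (P + 1) * (P + 1 - S) * h ^ 2 + (S ^ 2 - S * (P + 1) - 2 * P) * h + P) *
        (-(P + 1) * S * h ^ 2 + 2 * P * (P + 2) * h - P * S) -
      2 * ((P + 2) * h - S) * (h ^ 2 - S * h + P) *
        ((P + 1) ^ 2 * h ^ 2 - S * (P + 1) * h + P) =
      P ^ 2 * h * x * (S * (1 - h) ^ 2 - 4) + P * S ^ 2 * h * (1 - h) ^ 2 * x
      + 2 * P ^ 3 * h ^ 4 * (1 - h)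
      + P ^ 2 * S * (1 - 2 * h + h ^ 2 - h ^ 3 + 7 * h ^ 4 - h ^ 5)
      - P * S ^ 2 * (3 * h - 3 * h ^ 2 + 6 * h ^ 3)
      - P ^ 2 * (2 * h ^ 3 - 4 * h ^ 4 + 8 * h ^ 5)
      + P * S * (6 * h ^ 2 - 2 * h ^ 3 + 17 * h ^ 4 - h ^ 5)
      - P * (4 * h ^ 3 + 10 * h ^ 5) + S ^ 3 * (2 * h ^ 2 - h ^ 3)
      - S ^ 2 * (7 * h ^ 3 - h ^ 4) + S * (9 * h ^ 4) - 4 * h ^ 5 := by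
    rw [hxe]; ring
  linarith

/-- Since `z (a−1)(b−1) > 11`, the quadratic satisfied by `h` is positive at `1/2`, so that its
positive root is less than `1/2`. -/
lemma root_le_half (a b z h : ℝ) (ha : 17 ≤ a) (hab : a ≤ b) (hz : 11 < z * ((a - 1) * (b - 1)))
    (hz2 : z < 1) (h0 : 0 < h) (hD : 0 < (a * b + 1) ^ 2 * z - 1)
    (hq : ((a * b + 1) ^ 2 * z - 1) * h ^ 2 - (a + b) * ((a * b + 1) * z - 1) * h =
      a * b * (1 - z)) : h ≤ 1 / 2 := by
  have hT : 0 < (a - 1) * (b - 1) := mul_pos (by linarith) (by linarith)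
  have hz0 : 0 < z := by
    by_contra hn
    nlinarith
  have hW : 4 * (a * b) * ((a - 1) * (b - 1)) ≤
      11 * ((a * b + 1) ^ 2 - 2 * (a + b) * (a * b + 1) + 4 * (a * b)) := by
    obtain ⟨x, rfl⟩ : ∃ x, a = 17 + x := ⟨a - 17, by ring⟩
    obtain ⟨y, rfl⟩ : ∃ y, b = 17 + x + y := ⟨b - (17 + x), by ring⟩
    have hx : 0 ≤ x := by linarith
    have hy : 0 ≤ y := by linarith
    rw [← sub_nonneg]
    ring_nf
    positivity
  have hP : 0 < a * b := by nlinarith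
  have hhalf : 4 * (a * b) <
      z * ((a * b + 1) ^ 2 - 2 * (a + b) * (a * b + 1) + 4 * (a * b)) := by
    nlinarith [mul_le_mul_of_nonneg_left hW hz0.le]
  by_contra hn
  push Not at hn
  -- dividing the quadratic by `h` gives a function increasing in `h`
  have hc : 0 < a * b * (1 - z) := mul_pos hP (by linarith)
  have h4 : ((a * b + 1) ^ 2 * z - 1) - 2 * (a + b) * ((a * b + 1) * z - 1) -
      4 * (a * b * (1 - z)) > 0 := by nlinarith
  nlinarith [mul_pos h0 h4, mul_pos (mul_pos h0 (sub_pos.2 hn)) hD, mul_pos (sub_pos.2 hn) hc]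

/-- The algebraic core: `h` stands for `H(z)` and `Q` for the square root in its definition;
the last term is `2z(1−z)H'(z)`. -/
lemma core_ineq (a b z h Q : ℝ) (ha : 17 ≤ a) (hab : a ≤ b)
    (hz : 11 < z * ((a - 1) * (b - 1)))
    (hz2 : z < 1) (h0 : 0 < h) (hD : 0 < (a * b + 1) ^ 2 * z - 1) (hQ : 0 < Q)
    (hQe : ((a * b + 1) ^ 2 * z - 1) * h = (a + b) / 2 * ((a * b + 1) * z - 1) + Q)
    (hq : ((a * b + 1) ^ 2 * z - 1) * h ^ 2 - (a + b) * ((a * b + 1) * z - 1) * h =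
      a * b * (1 - z)) :
    (1 - z) + ((a + b) * z - 1) * h < a * b * z * h ^ 2 + 2 * z * (1 - z) *
      (-((a * b + 1) ^ 2 * h ^ 2 - (a + b) * (a * b + 1) * h + a * b) / (2 * Q)) := by
  have h1 := root_le_half a b z h ha hab hz hz2 h0 hD hq
  have hT : 0 < (a - 1) * (b - 1) := mul_pos (by linarith) (by linarith)
  have hz0 : 0 < z := by
    by_contra hn
    nlinarith
  have hPS : 17 * (a + b) ≤ 2 * (a * b) := by nlinarith
  have hS : 34 ≤ a + b := by linarith
  generalize a * b = P at *
  generalize a + b = S at *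
  have hP : 0 < P := by linarith
  have hN : 0 < h ^ 2 - S * h + P := by nlinarith [sq_nonneg h]
  have hMz : ((P + 1) ^ 2 * h ^ 2 - S * (P + 1) * h + P) * z = h ^ 2 - S * h + P := by
    linear_combination hq
  have hpoly := poly_ineq P S h hS hPS h0 h1
  obtain ⟨M, hM⟩ : ∃ M, M = (P + 1) ^ 2 * h ^ 2 - S * (P + 1) * h + P := ⟨_, rfl⟩
  rw [← hM] at hMz hpoly ⊢
  have hM0 : 0 < M := by
    by_contra hn
    nlinarith
  have hMx : M * (1 - z) = P * h * ((P + 2) * h - S) := by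
    rw [mul_sub, hMz, hM]; ring
  have hx : 0 < (P + 2) * h - S := by
    have h2 : 0 < P * h * ((P + 2) * h - S) := hMx ▸ mul_pos hM0 (by linarith)
    exact (pos_iff_pos_of_mul_pos h2).1 (by positivity)
  specialize hpoly hx
  have hQM : Q * M * 2 = P * (-(P + 1) * S * h ^ 2 + 2 * P * (P + 2) * h - P * S) := by
    have : Q = ((P + 1) ^ 2 * z - 1) * h - S / 2 * ((P + 1) * z - 1) := by linarith
    rw [this]
    linear_combination 2 * ((P + 1) ^ 2 * h - S / 2 * (P + 1)) * hMz + (S - 2 * h) * hM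
  have hG : M * (P * z * h ^ 2 + (1 - S * z) * h - (1 - z)) =
      h * (P * h ^ 3 + (P + 1) * (P + 1 - S) * h ^ 2 + (S ^ 2 - S * (P + 1) - 2 * P) * h + P) := by
    linear_combination (P * h ^ 2 - S * h + 1) * hMz + (h - 1) * hM
  generalize (P * h ^ 3 + (P + 1) * (P + 1 - S) * h ^ 2 +
    (S ^ 2 - S * (P + 1) - 2 * P) * h + P) = G at *
  generalize (-(P + 1) * S * h ^ 2 + 2 * P * (P + 2) * h - P * S) = B at *
  have hfin : (1 - z) * (z * M) < (P * z * h ^ 2 + (1 - S * z) * h - (1 - z)) * Q := by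
    have hm := mul_lt_mul_of_pos_left hpoly (mul_pos hP h0)
    have e1 : P * h * (2 * ((P + 2) * h - S) * (h ^ 2 - S * h + P) * M) =
        (1 - z) * (z * M) * (2 * M * M) := by
      rw [← hMz]
      linear_combination (-2 * M * z * M) * hMx
    have e2 : P * h * (G * B) =
        (P * z * h ^ 2 + (1 - S * z) * h - (1 - z)) * Q * (2 * M * M) := by
      linear_combination (-P * B) * hG -
        M * (P * z * h ^ 2 + (1 - S * z) * h - (1 - z)) * hQM
    rw [e1, e2] at hm
    exact lt_of_mul_lt_mul_right hm (by positivity)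
  have e3 : 2 * z * (1 - z) * (-M / (2 * Q)) = -((1 - z) * (z * M) / Q) := by
    field_simp
  rw [e3]
  have := (div_lt_iff₀ hQ).2 hfin
  linarith

/-- Inequality (4.10): for integers `m₃ ≥ m₂ ≥ 8` and `2.75/(m₂m₃) < z < 1`,
`(1−z) + (2(m₂+m₃+1)z − 1) H(z) < (2m₂+1)(2m₃+1) z H(z)² + 2z(1−z) H'(z)`. -/
theorem stmt_18 (m2 m3 : ℕ) (h8 : 8 ≤ m2) (h23 : m2 ≤ m3) (z : ℝ)
    (hz1 : 2.75 / ((m2 : ℝ) * m3) < z) (hz2 : z < 1) :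
    let r : ℝ := (2 * m2 + 1) * (2 * m3 + 1) + 1
    let H : ℝ → ℝ := fun w =>
      (((m2 : ℝ) + m3 + 1) * (r * w - 1) +
        Real.sqrt ((((m3 : ℝ) - m2) * (r * w - 1)) ^ 2 +
          (2 * (m2 : ℝ) + 1) ^ 3 * (2 * (m3 : ℝ) + 1) ^ 3 * w)) / (r ^ 2 * w - 1)
    (1 - z) + (2 * ((m2 : ℝ) + m3 + 1) * z - 1) * H z <
      (2 * (m2 : ℝ) + 1) * (2 * (m3 : ℝ) + 1) * z * (H z) ^ 2 +
        2 * z * (1 - z) * deriv H z := by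
  intro r H
  have h8' : (8 : ℝ) ≤ m2 := by exact_mod_cast h8
  have h23' : (m2 : ℝ) ≤ m3 := by exact_mod_cast h23
  have hmm : (0 : ℝ) < m2 * m3 := mul_pos (by linarith) (by linarith)
  rw [div_lt_iff₀ hmm] at hz1
  norm_num at hz1
  obtain ⟨a, ha⟩ : ∃ a : ℝ, a = 2 * m2 + 1 := ⟨_, rfl⟩
  obtain ⟨b, hb⟩ : ∃ b : ℝ, b = 2 * m3 + 1 := ⟨_, rfl⟩
  have hr : r = a * b + 1 := by rw [ha, hb]
  have ha17 : 17 ≤ a := by linarith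
  have hab : a ≤ b := by linarith
  have hz11 : 11 < z * ((a - 1) * (b - 1)) := by rw [ha, hb]; nlinarith
  have hz0 : 0 < z := by
    by_contra hn
    nlinarith
  have hP : 0 < a * b := by nlinarith
  have hA : 0 < r * z - 1 := by rw [hr]; nlinarith
  have hD : 0 < r ^ 2 * z - 1 := by nlinarith
  have hR : 0 < (((m3 : ℝ) - m2) * (r * z - 1)) ^ 2 +
          (2 * (m2 : ℝ) + 1) ^ 3 * (2 * (m3 : ℝ) + 1) ^ 3 * z := by positivity
  have hHz : H z = (((m2 : ℝ) + m3 + 1) * (r * z - 1) +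
        Real.sqrt ((((m3 : ℝ) - m2) * (r * z - 1)) ^ 2 +
          (2 * (m2 : ℝ) + 1) ^ 3 * (2 * (m3 : ℝ) + 1) ^ 3 * z)) / (r ^ 2 * z - 1) := rfl
  have hlin : ∀ c : ℝ, HasDerivAt (fun w : ℝ => c * w - 1) c z := fun c => by
    simpa using ((hasDerivAt_id z).const_mul c).sub_const 1
  have hder := (((hlin r).const_mul ((m2 : ℝ) + m3 + 1)).add
    (((((hlin r).const_mul ((m3 : ℝ) - m2)).pow 2).add
      ((hasDerivAt_id z).const_mul ((2 * (m2 : ℝ) + 1) ^ 3 * (2 * (m3 : ℝ) + 1) ^ 3))).sqrt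
        hR.ne')).div (hlin (r ^ 2)) hD.ne'
  have hderiv := HasDerivAt.deriv (f := H) hder
  simp only [id, Pi.add_apply, Pi.pow_apply] at hderiv
  have hQ := Real.sqrt_pos.2 hR
  have hQ2 := Real.sq_sqrt hR.le
  generalize Real.sqrt ((((m3 : ℝ) - m2) * (r * z - 1)) ^ 2 +
          (2 * (m2 : ℝ) + 1) ^ 3 * (2 * (m3 : ℝ) + 1) ^ 3 * z) = Q at *
  have hQe : (r ^ 2 * z - 1) * H z = ((m2 : ℝ) + m3 + 1) * (r * z - 1) + Q := by
    rw [hHz]; field_simp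
  have h0 : 0 < H z := by rw [hHz]; positivity
  have hs : (m2 : ℝ) + m3 + 1 = (a + b) / 2 := by rw [ha, hb]; ring
  have hd : (m3 : ℝ) - m2 = (b - a) / 2 := by rw [ha, hb]; ring
  rw [← ha, ← hb, hd] at hQ2
  rw [← ha, ← hb, hs, hd] at hderiv
  rw [hs] at hQe
  have hgoal : 2 * ((m2 : ℝ) + m3 + 1) = a + b := by rw [hs]; ring
  rw [hgoal, ← ha, ← hb, hderiv, ← hQe]
  generalize H z = h at *
  clear hderiv hder hHz
  clear_value r
  subst hr
  have hQ3 : Q = ((a * b + 1) ^ 2 * z - 1) * h - (a + b) / 2 * ((a * b + 1) * z - 1) := by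
    linarith
  have hq : ((a * b + 1) ^ 2 * z - 1) * h ^ 2 - (a + b) * ((a * b + 1) * z - 1) * h =
      a * b * (1 - z) := by
    rw [hQ3] at hQ2
    apply mul_left_cancel₀ hD.ne'
    linear_combination hQ2
  have hmain := core_ineq a b z h Q ha17 hab hz11 hz2 h0 hD hQ hQe hq
  convert hmain using 3
  -- what remains is the formula `H'(z) = −M/(2Q)`
  rw [div_eq_div_iff (by positivity) (by positivity)]
  field_simp
  rw [hQ3]
  linear_combination -2 * (a * b + 1) ^ 2 * hq
end

section
/- Let m2, m3 be integers with m3 ≥ m2 ≥ 8, and let z be a real number with 2.75/(m2·m3) < z < 1. Then F(−m2−1, −m3; 1/2; z) − [ (1−z) + (2m3+1) z H(z) ] · F(−m2, −m3; 1/2; z) < 0. -/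
section

open Polynomial

/-! ### The hypergeometric polynomial and its differential equation -/

/-- The coefficient of `z ^ j` in `F(-m, -n; 1/2; z)`. Descending factorials make it vanish for
`j > min m n`, so that the coefficient recurrences hold for every `j`. -/
noncomputable def hypCoeff (m n j : ℕ) : ℝ :=
  (m.descFactorial j : ℝ) * (n.descFactorial j : ℝ) * 4 ^ j / ((2 * j).factorial : ℝ)

/-- `F(-m, -n; 1/2; z)` as a polynomial in `z`. -/
noncomputable def hypPoly (m n : ℕ) : ℝ[X] :=
  ∑ j ∈ Finset.range (m + 1), monomial j (hypCoeff m n j)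

lemma hypPoly_coeff (m n j : ℕ) : (hypPoly m n).coeff j = hypCoeff m n j := by
  simp only [hypPoly, finsetSum_coeff, coeff_monomial]
  rw [Finset.sum_ite_eq' (Finset.range (m + 1)) j]
  split_ifs with h
  · rfl
  · have : m < j := by simpa using h
    simp [hypCoeff, Nat.descFactorial_of_lt this]

lemma F12_eq_eval (m n : ℕ) (z : ℝ) : F12 m n z = (hypPoly m n).eval z := by
  have hsub : Finset.range (min m n + 1) ⊆ Finset.range (m + 1) := by
    intro j hj
    simp only [Finset.mem_range] at *
    omega
  rw [F12, hypPoly, eval_finsetSum, Finset.mul_sum]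
  simp only [eval_monomial]
  rw [← Finset.sum_subset hsub]
  · refine Finset.sum_congr rfl fun j hj => ?_
    have hj' : j ≤ m ∧ j ≤ n := by
      simp only [Finset.mem_range] at hj
      omega
    have e1 : ((m - j).factorial : ℝ) * m.descFactorial j = m.factorial := by
      exact_mod_cast Nat.factorial_mul_descFactorial hj'.1
    have e2 : ((n - j).factorial : ℝ) * n.descFactorial j = n.factorial := by
      exact_mod_cast Nat.factorial_mul_descFactorial hj'.2
    have p1 : ((m - j).factorial : ℝ) ≠ 0 := by positivity
    have p2 : ((n - j).factorial : ℝ) ≠ 0 := by positivity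
    have p3 : ((2 * j).factorial : ℝ) ≠ 0 := by positivity
    rw [← e1, ← e2, hypCoeff]
    field_simp
  · intro j _ hj
    have : n < j ∨ m < j := by
      simp only [Finset.mem_range] at hj
      omega
    rcases this with h | h <;> simp [hypCoeff, Nat.descFactorial_of_lt h]

lemma descFactorial_succ_cast (m j : ℕ) :
    (m.descFactorial (j + 1) : ℝ) = ((m : ℝ) - j) * m.descFactorial j := by
  rcases le_or_gt j m with h | h
  · rw [Nat.descFactorial_succ, Nat.cast_mul, Nat.cast_sub h]
  · rw [Nat.descFactorial_of_lt h, Nat.descFactorial_of_lt (by omega)]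
    simp

lemma hypCoeff_succ (m n j : ℕ) :
    hypCoeff m n (j + 1) =
      4 * ((m : ℝ) - j) * ((n : ℝ) - j) / ((2 * j + 1) * (2 * j + 2)) * hypCoeff m n j := by
  have e : 2 * (j + 1) = (2 * j + 1) + 1 := by ring
  have p3 : ((2 * j).factorial : ℝ) ≠ 0 := by positivity
  rw [hypCoeff, hypCoeff, descFactorial_succ_cast, descFactorial_succ_cast, e,
    Nat.factorial_succ, Nat.factorial_succ]
  push_cast
  field_simp
  ring

lemma hypCoeff_succ_succ (m n j : ℕ) :
    hypCoeff (m + 1) n (j + 1) =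
      4 * ((m : ℝ) + 1) * ((n : ℝ) - j) / ((2 * j + 1) * (2 * j + 2)) * hypCoeff m n j := by
  have e : 2 * (j + 1) = (2 * j + 1) + 1 := by ring
  have p3 : ((2 * j).factorial : ℝ) ≠ 0 := by positivity
  rw [hypCoeff, hypCoeff, Nat.succ_descFactorial_succ, descFactorial_succ_cast n, e,
    Nat.factorial_succ, Nat.factorial_succ]
  push_cast
  field_simp
  ring

/-- The hypergeometric equation `z(1-z)f'' + (1/2 + (m+n-1)z)f' = mn f`, checked coefficientwise. -/
lemma hypPoly_ode (m n : ℕ) :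
    X * derivative (derivative (hypPoly m n)) - X * (X * derivative (derivative (hypPoly m n)))
      + C (1 / 2) * derivative (hypPoly m n)
      + C ((m : ℝ) + n - 1) * (X * derivative (hypPoly m n))
      - C ((m : ℝ) * n) * hypPoly m n = 0 := by
  ext j
  rcases j with _ | _ | i
  · simp only [coeff_add, coeff_sub, coeff_C_mul, coeff_derivative, hypPoly_coeff,
      coeff_X_mul_zero, coeff_zero, hypCoeff_succ]
    push_cast
    ring
  · simp only [coeff_add, coeff_sub, coeff_C_mul, coeff_derivative, hypPoly_coeff,
      coeff_X_mul, coeff_X_mul_zero, coeff_zero, hypCoeff_succ m n (0 + 1)]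
    push_cast
    ring
  · simp only [coeff_add, coeff_sub, coeff_C_mul, coeff_derivative, hypPoly_coeff,
      coeff_X_mul, coeff_zero, hypCoeff_succ m n (i + 1 + 1)]
    push_cast
    field_simp
    ring

/-- The contiguous relation
`(2m+1) F(-m-1,-n) = 2z(1-z) F'(-m,-n) + (2m+1+2nz) F(-m,-n)`. -/
lemma hypPoly_contig (m n : ℕ) :
    C (2 * (m : ℝ) + 1) * hypPoly (m + 1) n =
      C 2 * (X * derivative (hypPoly m n)) - C 2 * (X * (X * derivative (hypPoly m n)))
      + C (2 * (m : ℝ) + 1) * hypPoly m n + C (2 * (n : ℝ)) * (X * hypPoly m n) := by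
  ext j
  rcases j with _ | _ | i
  · simp only [coeff_add, coeff_sub, coeff_C_mul, hypPoly_coeff, coeff_X_mul_zero, hypCoeff]
    simp
  · simp only [coeff_add, coeff_sub, coeff_C_mul, coeff_derivative, hypPoly_coeff,
      coeff_X_mul, coeff_X_mul_zero, hypCoeff_succ_succ, hypCoeff_succ]
    push_cast
    ring
  · simp only [coeff_add, coeff_sub, coeff_C_mul, coeff_derivative, hypPoly_coeff, coeff_X_mul,
      hypCoeff_succ_succ, hypCoeff_succ m n (i + 1)]
    push_cast
    field_simp
    ring

lemma eval_nonneg_of_coeff {p : ℝ[X]} (hp : ∀ j, 0 ≤ p.coeff j) {z : ℝ} (hz : 0 ≤ z) :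
    0 ≤ p.eval z := by
  rw [eval_eq_sum_range]
  exact Finset.sum_nonneg fun j _ => mul_nonneg (hp j) (pow_nonneg hz j)

lemma derivative_coeff_nonneg {p : ℝ[X]} (hp : ∀ j, 0 ≤ p.coeff j) (j : ℕ) :
    0 ≤ (derivative p).coeff j := by
  rw [coeff_derivative]
  exact mul_nonneg (hp _) (by positivity)

lemma hypPoly_coeff_nonneg (m n j : ℕ) : 0 ≤ (hypPoly m n).coeff j := by
  rw [hypPoly_coeff, hypCoeff]
  positivity

lemma hypPoly_eval_pos (m n : ℕ) {z : ℝ} (hz : 0 ≤ z) : 0 < (hypPoly m n).eval z := by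
  rw [eval_eq_sum_range, Finset.sum_range_succ']
  have h0 : (hypPoly m n).coeff 0 = 1 := by simp [hypPoly_coeff, hypCoeff]
  rw [h0]
  have : 0 ≤ ∑ k ∈ Finset.range (hypPoly m n).natDegree,
      (hypPoly m n).coeff (k + 1) * z ^ (k + 1) :=
    Finset.sum_nonneg fun j _ => mul_nonneg (hypPoly_coeff_nonneg m n _) (pow_nonneg hz _)
  linarith

lemma hypPoly_ode_eval (m n : ℕ) (z : ℝ) :
    z * (1 - z) * (derivative (derivative (hypPoly m n))).eval z
      + (1 / 2 + ((m : ℝ) + n - 1) * z) * (derivative (hypPoly m n)).eval z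
      = m * n * (hypPoly m n).eval z := by
  have h := congrArg (eval z) (hypPoly_ode m n)
  simp only [eval_add, eval_sub, eval_mul, eval_X, eval_C, eval_zero] at h
  linarith

/-- The equation satisfied by `f'`, which is again hypergeometric with `m`, `n` lowered by one. -/
lemma hypPoly_ode_eval_one (m n : ℕ) (z : ℝ) :
    z * (1 - z) * (derivative (derivative (derivative (hypPoly m n)))).eval z
      + (3 / 2 + ((m : ℝ) + n - 3) * z) * (derivative (derivative (hypPoly m n))).eval z
      = ((m : ℝ) - 1) * (n - 1) * (derivative (hypPoly m n)).eval z := by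
  have h := congrArg (fun p => eval z (derivative p)) (hypPoly_ode m n)
  simp only [derivative_add, derivative_sub, derivative_mul, derivative_X, derivative_C,
    derivative_zero, eval_add, eval_sub, eval_mul, eval_X, eval_C, eval_zero, eval_one] at h
  linarith

/-- The equation satisfied by `f''`. -/
lemma hypPoly_ode_eval_two (m n : ℕ) (z : ℝ) :
    z * (1 - z) * (derivative (derivative (derivative (derivative (hypPoly m n))))).eval z
      + (5 / 2 + ((m : ℝ) + n - 5) * z)
        * (derivative (derivative (derivative (hypPoly m n)))).eval z
      = ((m : ℝ) - 2) * (n - 2) * (derivative (derivative (hypPoly m n))).eval z := by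
  have h := congrArg (fun p => eval z (derivative (derivative p))) (hypPoly_ode m n)
  simp only [derivative_add, derivative_sub, derivative_mul, derivative_X, derivative_C,
    derivative_zero, derivative_one, eval_add, eval_sub, eval_mul, eval_X, eval_C, eval_zero,
    eval_one] at h
  linarith

/-! ### Negativity of the derivative on the curve -/

/-- The inequality behind `super_poly`. In terms of `k = S/s` and `e = 1/s`, the leading term is
`-k(1+k)h(1-h)²(h-k)`, and the term of order `e` is controlled by `R_bound`; `4e ≤ k²` is AM-GM for
`a`, `b`. For `h ≤ k` the leading term has the wrong sign, but then `h` is within `2eh` of `k`. -/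
lemma core_ineq_s19 {h k e : ℝ} (hh : 0 < h) (hh' : h ≤ 5 / 8) (hk : 0 < k) (hk' : k ≤ 2 / 17)
    (he : 0 < e) (he' : e ≤ 1 / 289) (hek : 4 * e ≤ k ^ 2) (hhk : k < h * (1 + 2 * e)) :
    -k * (1 + k) * h * (1 - h) ^ 2 * (h - k) + e * (-k + (81 / 20) * h ^ 2) < 0 := by
  rcases le_or_gt h k with hc | hc
  · have h1 : k - h ≤ 2 * e * h := by linarith
    have h2 : k * (1 + k) * h * (1 - h) ^ 2 * (k - h) ≤ k * 2 * k * 1 * (2 * e * k) := by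
      gcongr
      all_goals nlinarith
    nlinarith [mul_pos he hk, mul_pos (mul_pos he hk) hk]
  · have hp : 0 < k * (1 + k) * h * (1 - h) ^ 2 * (h - k) := by
      have : 0 < 1 - h := by linarith
      have : 0 < h - k := by linarith
      positivity
    rcases le_or_gt ((81 / 20) * h ^ 2) k with hd | hd
    · nlinarith
    · have h1 : e * (-k + (81 / 20) * h ^ 2) ≤ k ^ 2 / 4 * (-k + (81 / 20) * h ^ 2) := by
        gcongr
        · linarith
        · linarith
      have h2 : k / 4 * (-k + (81 / 20) * h ^ 2) < (1 + k) * h * (1 - h) ^ 2 * (h - k) := by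
        have hq : k * ((1 - h) ^ 3 + (81 / 80) * h) < h * (1 - h) ^ 2 := by
          have hpos : 0 < (1 - h) ^ 3 + (81 / 80) * h := by
            have : 0 < 1 - h := by linarith
            positivity
          rcases le_or_gt h (3 / 20) with hs | hs
          · have hl : k * ((1 - h) ^ 3 + (81 / 80) * h) ≤
                (81 / 20) * h ^ 2 * ((1 - h) ^ 3 + (81 / 80) * h) := by gcongr
            have hm : (81 / 20) * h * ((1 - h) ^ 3 + (81 / 80) * h) < (1 - h) ^ 2 := by
              nlinarith [mul_nonneg hh.le (sub_nonneg.2 hs), mul_nonneg (sq_nonneg h) hh.le]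
            nlinarith
          · have hl : k * ((1 - h) ^ 3 + (81 / 80) * h) ≤
                2 / 17 * ((1 - h) ^ 3 + (81 / 80) * h) := by gcongr
            have hm : 2 / 17 * ((1 - h) ^ 3 + (81 / 80) * h) < h * (1 - h) ^ 2 := by
              nlinarith [mul_nonneg (sub_nonneg.2 hs.le) (sub_nonneg.2 hh'),
                mul_nonneg (mul_nonneg (sub_nonneg.2 hs.le) (sub_nonneg.2 hh')) hh.le]
            linarith
        have hc4 : h * (1 - h) ^ 2 ≤ 1 / 4 := by nlinarith [sq_nonneg (h - 1 / 3)]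
        nlinarith [mul_nonneg (sub_nonneg.2 hc4) (sq_nonneg k), mul_lt_mul_of_pos_left hq hh]
      nlinarith

/-- A crude upper bound for the coefficient of `e` in `super_poly`. -/
lemma R_bound {h k e : ℝ} (hh : 0 < h) (hh' : h ≤ 5 / 8) (hk : 0 < k) (hk' : k ≤ 2 / 17)
    (he : 0 < e) (he' : e ≤ 1 / 289) :
    -k + (-2 * k + 3 * k ^ 2) * h
      + (4 + 8 * e - 3 * k - 6 * k * e - 5 * k ^ 2 - 2 * k ^ 3) * h ^ 2
      + (2 * e + 4 * e ^ 2 + 5 * k + 2 * k * e + 10 * k ^ 2 + 7 * k ^ 2 * e + k ^ 3) * h ^ 3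
      - (2 + 4 * e + 9 * k + 17 * k * e + 9 * k * e ^ 2 + 2 * k ^ 2 + k ^ 2 * e) * h ^ 4
      + (2 + 8 * e + 10 * e ^ 2 + 4 * e ^ 3 + k + k * e) * h ^ 5 ≤ -k + (81 / 20) * h ^ 2 := by
  have hkk : k ^ 2 ≤ 2 / 17 * k := by nlinarith
  have hkkk : k ^ 3 ≤ 1 / 50 * k := by nlinarith
  have hee : e ^ 2 ≤ e / 289 := by nlinarith
  have heee : e ^ 3 ≤ e / 289 := by nlinarith
  have hke : k * e ≤ 1 / 289 * k := by nlinarith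
  have hkke : k ^ 2 * e ≤ 1 / 289 * k := by nlinarith [mul_pos hk he]
  have t1 : (3 * k ^ 2) * h ≤ 6 / 17 * k * h := by nlinarith
  have t3 : (2 * e + 4 * e ^ 2 + 5 * k + 2 * k * e + 10 * k ^ 2 + 7 * k ^ 2 * e + k ^ 3) * h ^ 3
      ≤ (3 * e + 6.3 * k) * h ^ 3 :=
    mul_le_mul_of_nonneg_right (by linarith) (by positivity)
  have t5 : (2 + 8 * e + 10 * e ^ 2 + 4 * e ^ 3 + k + k * e) * h ^ 5 ≤
      (2 + 9 * e + 2 * k) * h ^ 5 :=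
    mul_le_mul_of_nonneg_right (by linarith) (by positivity)
  have t4 : (2 + 9 * k) * h ^ 4 ≤ (2 + 4 * e + 9 * k + 17 * k * e + 9 * k * e ^ 2 + 2 * k ^ 2
      + k ^ 2 * e) * h ^ 4 := by
    have : 0 < 4 * e + 17 * k * e + 9 * k * e ^ 2 + 2 * k ^ 2 + k ^ 2 * e := by positivity
    exact mul_le_mul_of_nonneg_right (by linarith) (by positivity)
  have t2 : (4 + 8 * e - 3 * k - 6 * k * e - 5 * k ^ 2 - 2 * k ^ 3) * h ^ 2 ≤
      (4 + 8 * e - 3 * k) * h ^ 2 := by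
    have : 0 < 6 * k * e + 5 * k ^ 2 + 2 * k ^ 3 := by positivity
    exact mul_le_mul_of_nonneg_right (by linarith) (by positivity)
  have h3 : h ^ 3 ≤ 5 / 8 * h ^ 2 := by nlinarith [sq_nonneg h]
  have h3' : h ^ 3 ≤ 25 / 64 * h := by nlinarith [sq_nonneg h]
  have h5 : h ^ 5 ≤ 5 / 8 * h ^ 4 := by nlinarith [pow_pos hh 4]
  have h5' : h ^ 5 ≤ 1 / 4 * h ^ 2 := by nlinarith [pow_pos hh 4, pow_pos hh 2, pow_pos hh 3]
  have h4 : 0 < h ^ 4 := by positivity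
  have k1 : k * h ^ 3 ≤ k * (5 / 8 * h ^ 2) := by gcongr
  have k2 : k * h ^ 3 ≤ k * (25 / 64 * h) := by gcongr
  have k3 : k * h ^ 5 ≤ k * (5 / 8 * h ^ 4) := by gcongr
  have e1 : e * h ^ 3 ≤ e * (5 / 8 * h ^ 2) := by gcongr
  have e2 : e * h ^ 5 ≤ e * (1 / 4 * h ^ 2) := by gcongr
  have e3 : e * h ^ 2 ≤ 1 / 289 * h ^ 2 := by gcongr
  have k4 : 0 < k * h ^ 4 := by positivity
  have k5 : 0 < k * h ^ 2 := by positivity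
  have k6 : 0 < k * h := by positivity
  linarith

/-- Up to a positive factor, the left side is the derivative of `Φ(z, h(z))` at a zero of `Φ`, with
`z` eliminated and `S = a + b`, `s = ab`. -/
lemma super_poly {h S s : ℝ} (hs : 289 ≤ s) (hS : 17 * S ≤ 2 * s) (hS4 : 4 * s ≤ S ^ 2)
    (hS0 : 0 < S) (hh : 0 < h) (hh' : h ≤ 5 / 8) (hlow : S < (s + 2) * h) :
    2 * s * ((s + 2) * h - S) * (h ^ 2 - S * h + s) * ((s + 1) ^ 2 * h ^ 2 - (s + 1) * S * h + s)
    + (2 * s * (s + 2) * h - S * ((s + 1) * h ^ 2 + s)) *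
      ((2 * s + 1) * h * (h ^ 2 - S * h + s) - h * ((s + 1) ^ 2 * h ^ 2 - (s + 1) * S * h + s)
        - S * (h ^ 2 - S * h + s) - (s - S) * ((s + 1) ^ 2 * h ^ 2 - (s + 1) * S * h + s)) < 0 := by
  have hs0 : 0 < s := by linarith
  obtain ⟨k, hk⟩ : ∃ k, k = S / s := ⟨_, rfl⟩
  obtain ⟨e, he⟩ : ∃ e, e = 1 / s := ⟨_, rfl⟩
  have hSk : S = k / e := by rw [hk, he]; field_simp
  have hse : s = 1 / e := by rw [he]; field_simp
  have e0 : 0 < e := by rw [he]; positivity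
  have k0 : 0 < k := by rw [hk]; positivity
  have k1 : k ≤ 2 / 17 := by rw [hk, div_le_iff₀ hs0]; linarith
  have e1 : e ≤ 1 / 289 := by rw [he]; gcongr
  have e2 : 4 * e ≤ k ^ 2 := by
    rw [hk, he, div_pow, le_div_iff₀ (by positivity)]
    field_simp
    linarith
  have e3 : k < h * (1 + 2 * e) := by
    rw [hk, he, div_lt_iff₀ hs0]
    field_simp
    linarith
  have hR := R_bound hh hh' k0 k1 e0 e1
  have hC := core_ineq_s19 hh hh' k0 k1 e0 e1 e2 e3
  have hR' := mul_le_mul_of_nonneg_left hR e0.le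
  have e5 : 0 < e ^ 5 := by positivity
  refine neg_of_mul_neg_right ?_ e5.le
  -- Multiplied by `e ^ 5`, the expression is the leading term plus `e` times the sum in `hR`.
  refine lt_of_eq_of_lt (b := -k * (1 + k) * h * (1 - h) ^ 2 * (h - k)
    + e * (-k + (-2 * k + 3 * k ^ 2) * h
      + (4 + 8 * e - 3 * k - 6 * k * e - 5 * k ^ 2 - 2 * k ^ 3) * h ^ 2
      + (2 * e + 4 * e ^ 2 + 5 * k + 2 * k * e + 10 * k ^ 2 + 7 * k ^ 2 * e + k ^ 3) * h ^ 3
      - (2 + 4 * e + 9 * k + 17 * k * e + 9 * k * e ^ 2 + 2 * k ^ 2 + k ^ 2 * e) * h ^ 4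
      + (2 + 8 * e + 10 * e ^ 2 + 4 * e ^ 3 + k + k * e) * h ^ 5)) ?_ (by linarith)
  rw [hSk, hse]
  field_simp
  ring

/-- At a zero of `Φ(z, h) = z(rh-a)(rh-b) - (h-a)(h-b)` with `rz ≥ 3`, the total derivative
`∂Φ/∂z + h' ∂Φ/∂h` is negative when `h'` is given by the Riccati equation; it appears here multiplied
by `2s(1-z)z`. -/
lemma touching {a b z h : ℝ} (ha : 17 ≤ a) (hb : 17 ≤ b) (hz : 3 ≤ (a * b + 1) * z) (hz1 : z < 1)
    (hh : 0 < h)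
    (hphi : z * ((a * b + 1) * h - a) * ((a * b + 1) * h - b) - (h - a) * (h - b) = 0) :
    2 * (a * b) * (1 - z) * z * (((a * b + 1) * h - a) * ((a * b + 1) * h - b))
      + (2 * ((a * b + 1) ^ 2 * z - 1) * h - (a + b) * ((a * b + 1) * z - 1))
        * (-(a * b) ^ 2 * z * h ^ 2 + a * b * ((a + b) * z - 1) * h + a * b * (1 - z)) < 0 := by
  obtain ⟨s, hs⟩ : ∃ s, s = a * b := ⟨_, rfl⟩
  obtain ⟨S, hS⟩ : ∃ S, S = a + b := ⟨_, rfl⟩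
  have s1 : 289 ≤ s := by rw [hs]; nlinarith
  have S1 : 17 * S ≤ 2 * s := by rw [hs, hS]; nlinarith
  have S2 : 4 * s ≤ S ^ 2 := by rw [hs, hS]; nlinarith [sq_nonneg (a - b)]
  have S0 : 0 < S := by rw [hS]; linarith
  have hz0 : 0 < z := by
    rw [← hs] at hz
    by_contra hc
    nlinarith
  have hphi' : z * ((s + 1) ^ 2 * h ^ 2 - (s + 1) * S * h + s) - (h ^ 2 - S * h + s) = 0 := by
    rw [hs, hS]; linear_combination hphi
  rw [← hs] at hz
  -- On the curve, `rz ≥ 3` forces `h` to be bounded away from `1`.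
  have h58 : h ≤ 5 / 8 := by
    by_contra hc
    push Not at hc
    have p1 : 0 < (s + 1) * h ^ 2 - S * h := by
      have : 0 < (s + 1) * h - S := by nlinarith
      nlinarith
    have p2 : 0 ≤ ((s + 1) * z - 3) * ((s + 1) * h ^ 2 - S * h) :=
      mul_nonneg (by linarith) p1.le
    have p3 : 0 < s * (3 * h ^ 2 - 4 / 17 * h - 1) := by
      apply mul_pos (by linarith)
      nlinarith
    have p4 : S * h ≤ 2 / 17 * s * h := by nlinarith
    nlinarith [mul_pos hz0 (by linarith : 0 < s), sq_nonneg h]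
  -- The equation of the curve reads `z = N / D`.
  obtain ⟨N, hN⟩ : ∃ N, N = h ^ 2 - S * h + s := ⟨_, rfl⟩
  obtain ⟨D, hD⟩ : ∃ D, D = (s + 1) ^ 2 * h ^ 2 - (s + 1) * S * h + s := ⟨_, rfl⟩
  have hN0 : 0 < N := by
    rw [hN]; nlinarith
  have hzD : z * D = N := by rw [hN, hD]; linarith
  have hD0 : 0 < D := by
    by_contra hc
    nlinarith
  -- Since `(1 - z) D = s h ((s + 2) h - S)`, the condition `z < 1` bounds `h` from below.
  have hlow : S < (s + 2) * h := by
    have h1 : 0 < (1 - z) * D := mul_pos (by linarith) hD0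
    have h2 : (1 - z) * D = s * h * ((s + 2) * h - S) := by
      rw [sub_mul, hzD, hN, hD]; ring
    rw [h2] at h1
    have h3 := pos_of_mul_pos_right h1 (by positivity)
    linarith
  have hE := super_poly s1 S1 S2 S0 hh h58 hlow
  have hzz : z = N / D := by field_simp; linarith
  have key : 2 * (a * b) * (1 - z) * z * (((a * b + 1) * h - a) * ((a * b + 1) * h - b))
      + (2 * ((a * b + 1) ^ 2 * z - 1) * h - (a + b) * ((a * b + 1) * z - 1))
        * (-(a * b) ^ 2 * z * h ^ 2 + a * b * ((a + b) * z - 1) * h + a * b * (1 - z))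
      = s * h / D ^ 2 * (2 * s * ((s + 2) * h - S) * (h ^ 2 - S * h + s)
        * ((s + 1) ^ 2 * h ^ 2 - (s + 1) * S * h + s)
    + (2 * s * (s + 2) * h - S * ((s + 1) * h ^ 2 + s)) *
      ((2 * s + 1) * h * (h ^ 2 - S * h + s) - h * ((s + 1) ^ 2 * h ^ 2 - (s + 1) * S * h + s)
        - S * (h ^ 2 - S * h + s) - (s - S) * ((s + 1) ^ 2 * h ^ 2 - (s + 1) * S * h + s))) := by
    have hab : ((a * b + 1) * h - a) * ((a * b + 1) * h - b) = D := by
      rw [hD, hs, hS]; ring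
    rw [hab, ← hs, ← hS, hzz]
    field_simp
    rw [hN, hD]
    ring
  rw [key]
  exact mul_neg_of_pos_of_neg (by positivity) hE

/-- A function that is negative at `c` and has negative derivative at each of its zeros
stays negative. -/
lemma neg_of_touching {g g' : ℝ → ℝ} {c d : ℝ} (hg : ∀ x, c ≤ x → x < d → HasDerivAt g (g' x) x)
    (hc : g c < 0) (ht : ∀ x, c ≤ x → x < d → g x = 0 → g' x < 0) {x : ℝ} (hcx : c ≤ x)
    (hxd : x < d) : g x < 0 := by
  have hle : ∀ y, c ≤ y → y < d → g y ≤ 0 := by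
    intro y hcy hyd
    refine image_le_of_deriv_right_lt_deriv_boundary' (f := g) (f' := g') (a := c) (b := y)
      (B := fun _ => 0) (B' := fun _ => 0) ?_ ?_ hc.le continuousOn_const ?_ ?_ ⟨hcy, le_rfl⟩
    · intro w hw
      exact (hg w hw.1 (hw.2.trans_lt hyd)).continuousAt.continuousWithinAt
    · intro w hw
      exact (hg w hw.1 (hw.2.trans hyd)).hasDerivWithinAt
    · intro w _
      exact hasDerivWithinAt_const _ _ _
    · intro w hw h0
      exact ht w hw.1 (hw.2.trans hyd) h0
  refine lt_of_le_of_ne (hle x hcx hxd) fun h0 => ?_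
  have hcx' : c < x := by
    refine lt_of_le_of_ne hcx fun he => ?_
    rw [← he] at h0
    exact hc.ne h0
  have hmax : IsLocalMax g x := by
    filter_upwards [Ioo_mem_nhds hcx' hxd] with y hy
    rw [h0]
    exact hle y hy.1.le hy.2
  have := hmax.hasDerivAt_eq_zero (hg x hcx hxd)
  exact (ht x hcx hxd h0).ne this


/-! ### The Riccati function -/

/-- The function `h = (2(1-z) f'/f + 2m + 2n + 1) / ((2m+1)(2n+1))`, `f(z) = F(-m,-n;1/2;z)`,
an affine reparametrization of `F(-m-1,-n;1/2;z) / f(z)`; see `F12_succ`. -/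
noncomputable def hfun (m n : ℕ) (z : ℝ) : ℝ :=
  (2 * (1 - z) * ((derivative (hypPoly m n)).eval z / (hypPoly m n).eval z) + (2 * m + 2 * n + 1))
    / ((2 * m + 1) * (2 * n + 1))

lemma hfun_pos (m n : ℕ) {z : ℝ} (hz : 0 ≤ z) (hz1 : z < 1) : 0 < hfun m n z := by
  have h0 := hypPoly_eval_pos m n hz
  have h1 := eval_nonneg_of_coeff (derivative_coeff_nonneg (hypPoly_coeff_nonneg m n)) hz
  have h2 : 0 < 1 - z := by linarith
  unfold hfun
  positivity

lemma F12_succ (m n : ℕ) {z : ℝ} (hz : 0 ≤ z) :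
    F12 (m + 1) n z = (1 - z + (2 * n + 1) * z * hfun m n z) * F12 m n z := by
  have h0 := hypPoly_eval_pos m n hz
  have h := congrArg (eval z) (hypPoly_contig m n)
  simp only [eval_add, eval_sub, eval_mul, eval_X, eval_C] at h
  have hm : (0 : ℝ) < 2 * m + 1 := by positivity
  rw [F12_eq_eval, F12_eq_eval, hfun]
  apply mul_left_cancel₀ hm.ne'
  rw [h]
  field_simp
  ring

/-- The Riccati equation of `h`. -/
lemma hfun_riccati (m n : ℕ) {z : ℝ} (hz : 0 ≤ z) :
    ∃ h', HasDerivAt (hfun m n) h' z ∧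
      2 * ((2 * m + 1) * (2 * n + 1)) * (1 - z) * z * h' =
        -((2 * m + 1) * (2 * n + 1)) ^ 2 * z * hfun m n z ^ 2
        + (2 * m + 1) * (2 * n + 1) * (((2 * m + 1) + (2 * n + 1)) * z - 1) * hfun m n z
        + (2 * m + 1) * (2 * n + 1) * (1 - z) := by
  have h0 := hypPoly_eval_pos m n hz
  have ho := hypPoly_ode_eval m n z
  have d0 := (hypPoly m n).hasDerivAt z
  have d1 := (derivative (hypPoly m n)).hasDerivAt z
  have dz : HasDerivAt (fun w : ℝ => 2 * (1 - w)) (2 * (-1)) z :=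
    ((hasDerivAt_id z).const_sub 1).const_mul 2
  have d := (((dz.mul (d1.div d0 h0.ne')).add_const (2 * m + 2 * n + 1 : ℝ)).div_const
    ((2 * m + 1) * (2 * n + 1) : ℝ))
  refine ⟨_, d, ?_⟩
  unfold hfun
  simp only [Pi.div_apply]
  set f := (hypPoly m n).eval z
  set f1 := (derivative (hypPoly m n)).eval z
  set f2 := (derivative (derivative (hypPoly m n))).eval z
  have hm : (0 : ℝ) < 2 * m + 1 := by positivity
  have hn : (0 : ℝ) < 2 * n + 1 := by positivity
  field_simp
  linear_combination (4 * (1 - z) * f) * ho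

/-! ### The starting point -/

/-- The polynomial inequality left after clearing denominators in `cf_bound`. Expanded at
`m = 8 + x`, `n = 8 + y`, the difference of the two sides has only nonnegative coefficients. -/
lemma initial_poly {m n : ℝ} (hm : 8 ≤ m) (hn : 8 ≤ n) :
    2 * (m * n) * ((4 * m * n + 2 * m + 2 * n + 2) *
        (9 / 5 * (4 * m * n + 2 * m + 2 * n + 2) + 3 * (m + n - 3))) ≤
      (11 / 5 * (m * n) + 9 / 20) *
        (3 * ((4 * m * n + 2 * m + 2 * n + 2) - 3) * ((m - 1) * (n - 1))
          + (9 / 5 * (4 * m * n + 2 * m + 2 * n + 2) + 3 * (m + n - 3))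
            * ((4 * m * n + 2 * m + 2 * n + 2) / 2 + 3 * (m + n - 1))) := by
  obtain ⟨x, rfl⟩ : ∃ x, m = 8 + x := ⟨m - 8, by ring⟩
  obtain ⟨y, rfl⟩ : ∃ y, n = 8 + y := ⟨n - 8, by ring⟩
  have hx : 0 ≤ x := by linarith
  have hy : 0 ≤ y := by linarith
  rw [← sub_nonneg]
  ring_nf
  positivity

/-- With `k = S/s` and `e = 1/s`, this implies `Φ(3/r, h) < 0`. -/
lemma initial_quad {k e h : ℝ} (hk : 0 < k) (hk' : k ≤ 2 / 17) (he : 0 < e) (hek : 4 * e ≤ k ^ 2)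
    (hh : 0 < h) (hh' : h ≤ 11 / 20 + 9 / 20 * k) :
    (3 + 2 * e) * h ^ 2 - 2 * k * h < 1 - 3 * e := by
  have h1 : h * ((3 + 2 * e) * h - 2 * k) ≤
      h * ((3 + 2 * e) * (11 / 20 + 9 / 20 * k) - 2 * k) := by gcongr
  have h2 : 0 ≤ (3 + 2 * e) * (11 / 20 + 9 / 20 * k) - 2 * k := by nlinarith
  have h3 := mul_le_mul_of_nonneg_right hh' h2
  have e1 : e ≤ 1 / 289 := by nlinarith
  nlinarith [mul_pos hk he, mul_pos (mul_pos hk he) hk, mul_nonneg hk.le (sub_nonneg.2 hk')]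

/-- A truncation of the continued fraction of `f/f'`: the equation `o2` with its higher terms dropped
bounds `f3/f2`, then `o1` bounds `f2/f1` from below, and `o0` bounds `f1/f` from above. -/
lemma cf_bound {M N r z f f1 f2 f3 f4 : ℝ} (hM : 8 ≤ M) (hN : 8 ≤ N)
    (hr : r = 4 * M * N + 2 * M + 2 * N + 2) (hrz : r * z = 3)
    (p1 : 0 ≤ f1) (p2 : 0 ≤ f2) (p3 : 0 ≤ f3) (p4 : 0 ≤ f4)
    (o0 : z * (1 - z) * f2 + (1 / 2 + (M + N - 1) * z) * f1 = M * N * f)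
    (o1 : z * (1 - z) * f3 + (3 / 2 + (M + N - 3) * z) * f2 = (M - 1) * (N - 1) * f1)
    (o2 : z * (1 - z) * f4 + (5 / 2 + (M + N - 5) * z) * f3 = (M - 2) * (N - 2) * f2) :
    2 * f1 ≤ (11 / 5 * (M * N) + 9 / 20) * f := by
  have hM0 : 0 < M := by linarith
  have hN0 : 0 < N := by linarith
  have hr0 : 0 < r := by rw [hr]; positivity
  have hz0 : 0 ≤ z := by
    by_contra hc
    nlinarith only [hc, hr0, hrz]
  have ip := initial_poly hM hN
  rw [← hr] at ip
  have hz1 : z < 1 := by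
    by_contra hc
    have : r * 1 ≤ r * z := mul_le_mul_of_nonneg_left (not_lt.1 hc) hr0.le
    have : 0 ≤ 4 * M * N := by positivity
    linarith
  have q1 : (M - 2) * (N - 2) * z ≤ 3 / 4 := by
    have : 4 * ((M - 2) * (N - 2)) ≤ r := by rw [hr]; linarith
    have := mul_le_mul_of_nonneg_right this hz0
    linarith
  have q2 : 5 / 2 * f3 ≤ (M - 2) * (N - 2) * f2 := by
    have : 0 ≤ z * (1 - z) * f4 := mul_nonneg (mul_nonneg hz0 (by linarith)) p4
    have : 0 ≤ (M + N - 5) * z * f3 := mul_nonneg (mul_nonneg (by linarith) hz0) p3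
    linarith
  have q3 : z * (1 - z) * f3 ≤ 3 / 10 * f2 := by
    have a1 : z * (5 / 2 * f3) ≤ z * ((M - 2) * (N - 2) * f2) := mul_le_mul_of_nonneg_left q2 hz0
    have a2 : (M - 2) * (N - 2) * z * f2 ≤ 3 / 4 * f2 := mul_le_mul_of_nonneg_right q1 p2
    have a3 : 0 ≤ z * z * f3 := by positivity
    linarith
  obtain ⟨T, hT⟩ : ∃ T, T = 9 / 5 + (M + N - 3) * z := ⟨_, rfl⟩
  have hT0 : 0 < T := by
    rw [hT]
    have : 0 ≤ (M + N - 3) * z := mul_nonneg (by linarith) hz0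
    linarith
  have q4 : (M - 1) * (N - 1) * f1 ≤ T * f2 := by
    rw [hT]; linarith
  have q5 : (z * (1 - z) * ((M - 1) * (N - 1)) + T * (1 / 2 + (M + N - 1) * z)) * f1 ≤
      T * (M * N * f) := by
    have := mul_le_mul_of_nonneg_left q4 (mul_nonneg hz0 (by linarith : 0 ≤ 1 - z))
    rw [← o0]
    linarith
  have q6 : 2 * (M * N) * T ≤ (11 / 5 * (M * N) + 9 / 20) *
      (z * (1 - z) * ((M - 1) * (N - 1)) + T * (1 / 2 + (M + N - 1) * z)) := by
    have e1 : 9 / 5 * r + 3 * (M + N - 3) = r * T := by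
      rw [hT]; linear_combination (-(M + N - 3)) * hrz
    have e2 : r / 2 + 3 * (M + N - 1) = r * (1 / 2 + (M + N - 1) * z) := by
      linear_combination (-(M + N - 1)) * hrz
    have e3 : 3 * (r - 3) = r ^ 2 * (z * (1 - z)) := by
      linear_combination (-r + 3 + r * z) * hrz
    rw [e1, e2, e3] at ip
    have hr2 : 0 < r ^ 2 := by positivity
    refine le_of_mul_le_mul_left ?_ hr2
    linarith
  have hMN : 0 < M * N := by positivity
  have q7 := mul_le_mul_of_nonneg_right q6 p1
  have q8 := mul_le_mul_of_nonneg_left q5 (by positivity : 0 ≤ 11 / 5 * (M * N) + 9 / 20)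
  refine le_of_mul_le_mul_left ?_ (mul_pos hMN hT0)
  linarith

/-- The bound `2f'/f ≤ (11/5)mn + 9/20` at `z = 3/r`, which gives `h ≤ 11/20 + (9/20)(S/s)`. -/
lemma log_deriv_bound {m n : ℕ} (hm : 8 ≤ m) (hn : 8 ≤ n) {z : ℝ}
    (hz : ((2 * (m : ℝ) + 1) * (2 * n + 1) + 1) * z = 3) :
    2 * (derivative (hypPoly m n)).eval z ≤
      (11 / 5 * ((m : ℝ) * n) + 9 / 20) * (hypPoly m n).eval z := by
  have hm' : (8 : ℝ) ≤ m := by exact_mod_cast hm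
  have hn' : (8 : ℝ) ≤ n := by exact_mod_cast hn
  have hr0 : (0 : ℝ) < (2 * (m : ℝ) + 1) * (2 * n + 1) + 1 := by positivity
  have hz0 : 0 ≤ z := by
    by_contra hc
    nlinarith only [hc, hr0, hz]
  have c1 := derivative_coeff_nonneg (hypPoly_coeff_nonneg m n)
  have c2 := derivative_coeff_nonneg c1
  have c3 := derivative_coeff_nonneg c2
  exact cf_bound hm' hn' rfl (by linear_combination hz) (eval_nonneg_of_coeff c1 hz0)
    (eval_nonneg_of_coeff c2 hz0) (eval_nonneg_of_coeff c3 hz0)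
    (eval_nonneg_of_coeff (derivative_coeff_nonneg c3) hz0)
    (hypPoly_ode_eval m n z) (hypPoly_ode_eval_one m n z) (hypPoly_ode_eval_two m n z)

/-- `Φ(z, h(z)) < 0` at `z = 3/r`. -/
lemma hfun_initial {m n : ℕ} (hm : 8 ≤ m) (hn : 8 ≤ n) {z : ℝ}
    (hz : ((2 * (m : ℝ) + 1) * (2 * n + 1) + 1) * z = 3) :
    z * (((2 * (m : ℝ) + 1) * (2 * n + 1) + 1) * hfun m n z - (2 * m + 1))
        * (((2 * (m : ℝ) + 1) * (2 * n + 1) + 1) * hfun m n z - (2 * n + 1))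
      - (hfun m n z - (2 * m + 1)) * (hfun m n z - (2 * n + 1)) < 0 := by
  have hL := log_deriv_bound hm hn hz
  have hm' : (8 : ℝ) ≤ m := by exact_mod_cast hm
  have hn' : (8 : ℝ) ≤ n := by exact_mod_cast hn
  obtain ⟨s, hs⟩ : ∃ s : ℝ, s = (2 * (m : ℝ) + 1) * (2 * n + 1) := ⟨_, rfl⟩
  obtain ⟨S, hS⟩ : ∃ S : ℝ, S = (2 * (m : ℝ) + 1) + (2 * n + 1) := ⟨_, rfl⟩
  have s0 : 289 ≤ s := by rw [hs]; nlinarith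
  have s0' : 0 < s := by linarith
  have S0 : 0 < S := by rw [hS]; positivity
  have S1 : 17 * S ≤ 2 * s := by rw [hs, hS]; nlinarith
  have S2 : 4 * s ≤ S ^ 2 := by rw [hs, hS]; nlinarith [sq_nonneg ((m : ℝ) - n)]
  have hz0 : 0 ≤ z := by
    rw [← hs] at hz
    by_contra hc
    nlinarith
  have hz1 : z < 1 := by
    rw [← hs] at hz
    nlinarith
  have p0 := hypPoly_eval_pos m n hz0
  have p1 := eval_nonneg_of_coeff (derivative_coeff_nonneg (hypPoly_coeff_nonneg m n)) hz0
  have hh : hfun m n z ≤ 11 / 20 + 9 / 20 * (S / s) := by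
    rw [hfun, ← hs, div_le_iff₀ s0']
    have g0 : 2 * ((derivative (hypPoly m n)).eval z / (hypPoly m n).eval z) ≤
        11 / 5 * ((m : ℝ) * n) + 9 / 20 := by
      rw [← mul_div_assoc, div_le_iff₀ p0]
      exact hL
    have g1 : 0 ≤ z * ((derivative (hypPoly m n)).eval z / (hypPoly m n).eval z) := by positivity
    have g2 : (11 / 20 + 9 / 20 * (S / s)) * s = 11 / 20 * s + 9 / 20 * S := by field_simp
    rw [g2, hs, hS]
    nlinarith
  have hpos := hfun_pos m n hz0 hz1
  have hq := initial_quad (k := S / s) (e := 1 / s) (by positivity)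
    (by rw [div_le_iff₀ s0']; linarith) (by positivity)
    (by rw [div_pow, le_div_iff₀ (by positivity)]; field_simp; linarith) hpos hh
  generalize hfun m n z = h at *
  have hq' : (3 * s + 2) * h ^ 2 - 2 * S * h < s - 3 := by
    have := mul_lt_mul_of_pos_left hq s0'
    field_simp at this
    linarith
  rw [← hs] at hz ⊢
  refine neg_of_mul_neg_right (a := s + 1) ?_ (by linarith)
  have : (s + 1) * (z * ((s + 1) * h - (2 * m + 1)) * ((s + 1) * h - (2 * n + 1))
      - (h - (2 * m + 1)) * (h - (2 * n + 1)))
      = (s + 1) * ((3 * s + 2) * h ^ 2 - 2 * S * h - (s - 3)) - 3 := by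
    have : (2 * (n : ℝ) + 1) = S - (2 * m + 1) := by rw [hS]; ring
    have e2 : (2 * (m : ℝ) + 1) * (S - (2 * m + 1)) = s := by rw [hs, hS]; ring
    rw [this]
    linear_combination (((s + 1) * h - (2 * m + 1)) * ((s + 1) * h - (S - (2 * m + 1)))) * hz
      + (3 - (s + 1)) * e2
  rw [this]
  nlinarith

/-! ### Conclusion -/

/-- `Φ(z, h(z)) < 0` on `[3/r, 1)`. -/
lemma hfun_below {m n : ℕ} (hm : 8 ≤ m) (hn : 8 ≤ n) {z : ℝ}
    (hz : 3 ≤ ((2 * (m : ℝ) + 1) * (2 * n + 1) + 1) * z) (hz1 : z < 1) :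
    z * (((2 * (m : ℝ) + 1) * (2 * n + 1) + 1) * hfun m n z - (2 * m + 1))
        * (((2 * (m : ℝ) + 1) * (2 * n + 1) + 1) * hfun m n z - (2 * n + 1))
      - (hfun m n z - (2 * m + 1)) * (hfun m n z - (2 * n + 1)) < 0 := by
  have hm' : (8 : ℝ) ≤ m := by exact_mod_cast hm
  have hn' : (8 : ℝ) ≤ n := by exact_mod_cast hn
  obtain ⟨a, ha⟩ : ∃ a : ℝ, a = 2 * (m : ℝ) + 1 := ⟨_, rfl⟩
  obtain ⟨b, hb⟩ : ∃ b : ℝ, b = 2 * (n : ℝ) + 1 := ⟨_, rfl⟩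
  have a17 : 17 ≤ a := by rw [ha]; linarith
  have b17 : 17 ≤ b := by rw [hb]; linarith
  have hr : 0 < a * b + 1 := by positivity
  have hinit := hfun_initial hm hn (z := 3 / (a * b + 1)) (by rw [← ha, ← hb]; field_simp)
  have hric : ∀ x : ℝ, 3 / (a * b + 1) ≤ x → ∃ h', HasDerivAt (hfun m n) h' x ∧
      2 * (a * b) * (1 - x) * x * h' = -(a * b) ^ 2 * x * hfun m n x ^ 2
        + a * b * ((a + b) * x - 1) * hfun m n x + a * b * (1 - x) := by
    intro x hx
    have := hfun_riccati m n (z := x) (le_trans (by positivity) hx)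
    rwa [← ha, ← hb] at this
  rw [← ha, ← hb] at hz hinit ⊢
  choose! h' hd he using hric
  refine neg_of_touching (c := 3 / (a * b + 1)) (d := 1)
    (g := fun x => x * ((a * b + 1) * hfun m n x - a) * ((a * b + 1) * hfun m n x - b)
      - (hfun m n x - a) * (hfun m n x - b))
    (g' := fun x => ((a * b + 1) * hfun m n x - a) * ((a * b + 1) * hfun m n x - b)
      + (2 * ((a * b + 1) ^ 2 * x - 1) * hfun m n x - (a + b) * ((a * b + 1) * x - 1)) * h' x)
    ?_ hinit ?_ (by rw [div_le_iff₀ hr]; linarith) hz1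
  · intro x hx _
    have d := hd x hx
    have d1 := (((hasDerivAt_id x).mul ((d.const_mul (a * b + 1)).sub_const a)).mul
      ((d.const_mul (a * b + 1)).sub_const b)).sub ((d.sub_const a).mul (d.sub_const b))
    refine d1.congr_deriv ?_
    simp only [id, Pi.mul_apply]
    ring
  · intro x hx hx1 h0
    have x0 : 0 < x := lt_of_lt_of_le (by positivity) hx
    have ht := touching a17 b17 (by rw [div_le_iff₀ hr] at hx; linarith) hx1
      (hfun_pos m n x0.le hx1) h0
    rw [← he x hx] at ht
    have hpos : 0 < 2 * (a * b) * (1 - x) * x := by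
      have : 0 < 1 - x := by linarith
      positivity
    refine neg_of_mul_neg_right ?_ hpos.le
    linarith

end

/-- Inequality (4.7): for integers `m₃ ≥ m₂ ≥ 8` and `2.75/(m₂m₃) < z < 1`,
`G(z) = F(−m₂−1,−m₃;1/2;z) − [(1−z) + (2m₃+1) z H(z)] F(−m₂,−m₃;1/2;z) < 0`. -/
theorem stmt_19 (m2 m3 : ℕ) (h8 : 8 ≤ m2) (h23 : m2 ≤ m3) (z : ℝ)
    (hz1 : 2.75 / ((m2 : ℝ) * m3) < z) (hz2 : z < 1) :
    let r : ℝ := (2 * m2 + 1) * (2 * m3 + 1) + 1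
    let H : ℝ → ℝ := fun w =>
      (((m2 : ℝ) + m3 + 1) * (r * w - 1) +
        Real.sqrt ((((m3 : ℝ) - m2) * (r * w - 1)) ^ 2 +
          (2 * (m2 : ℝ) + 1) ^ 3 * (2 * (m3 : ℝ) + 1) ^ 3 * w)) / (r ^ 2 * w - 1)
    F12 (m2 + 1) m3 z - ((1 - z) + (2 * (m3 : ℝ) + 1) * z * H z) * F12 m2 m3 z < 0 := by
  intro r H
  have h2 : (8 : ℝ) ≤ m2 := by exact_mod_cast h8
  have h3 : (8 : ℝ) ≤ m3 := by exact_mod_cast h8.trans h23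
  have hmm : 0 < (m2 : ℝ) * m3 := by positivity
  have hz0 : 0 < z := lt_trans (by positivity) hz1
  have hrz : 3 ≤ r * z := by
    rw [div_lt_iff₀ hmm] at hz1
    have : 4 * ((m2 : ℝ) * m3) ≤ r := by simp only [r]; nlinarith
    nlinarith
  have hr1 : 1 ≤ r := by simp only [r]; nlinarith
  have hb := hfun_below h8 (h8.trans h23) hrz hz2
  have hD : 0 < r ^ 2 * z - 1 := by nlinarith
  have hlt : hfun m2 m3 z < H z := by
    simp only [H]
    rw [lt_div_iff₀ hD, ← sub_lt_iff_lt_add']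
    apply Real.lt_sqrt_of_sq_lt
    -- The quadratic `Φ` in `h`, completed to a square: its discriminant is the radicand.
    have hsq : (hfun m2 m3 z * (r ^ 2 * z - 1) - ((m2 : ℝ) + m3 + 1) * (r * z - 1)) ^ 2
        = (r ^ 2 * z - 1) * (z * (r * hfun m2 m3 z - (2 * m2 + 1))
            * (r * hfun m2 m3 z - (2 * m3 + 1))
          - (hfun m2 m3 z - (2 * m2 + 1)) * (hfun m2 m3 z - (2 * m3 + 1)))
        + ((((m3 : ℝ) - m2) * (r * z - 1)) ^ 2
          + (2 * (m2 : ℝ) + 1) ^ 3 * (2 * (m3 : ℝ) + 1) ^ 3 * z) := by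
      simp only [r]
      ring
    rw [hsq]
    have := mul_neg_of_pos_of_neg hD hb
    linarith
  have hF : 0 < F12 m2 m3 z := by
    rw [F12_eq_eval]
    exact hypPoly_eval_pos m2 m3 hz0.le
  have hfin : 0 < (2 * (m3 : ℝ) + 1) * z * (H z - hfun m2 m3 z) * F12 m2 m3 z := by
    have : 0 < H z - hfun m2 m3 z := by linarith
    positivity
  rw [F12_succ m2 m3 hz0.le]
  linarith
end
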